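/- arXiv:2502.17853 — 9 statements merged into one kernel-verified Lean document; each statement's English description precedes it below -/
import Mathlib

section
/- Let d ≥ 1 be an integer, let G* : ℝ → ℝ be continuously differentiable, let D ⊆ (−∞,0) × ℝ^d be open, and let y : D → ℝ^d be differentiable and satisfy, for all (s,x) ∈ D and all i = 1,…,d, y_i(s,x) − x_i = 2 s · G*′(⟨y(s,x)⟩), where ⟨z⟩ := z₁+⋯+z_d. Define Ĝ(s,x) := −|y(s,x) − x|²/(4s) + G*(⟨y(s,x)⟩), where |·| is the Euclidean norm on ℝ^d. Then for all (s,x) ∈ D and all i = 1,…,d: ∂Ĝ/∂x_i (s,x) = G*′(⟨y(s,x)⟩) and ∂Ĝ/∂s (s,x) = |y(s,x) − x|²/(4s²). In particular Ĝ satisfies the Hamilton–Jacobi equation ∂Ĝ/∂s = |∇_x Ĝ|² on D. -/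
/-!
Write `Ĝ(s, x) = A(s, x, y(s, x))` with `A(s, x, z) = -|z - x|² / (4s) + G(z)`. The equation
`z - x = 2s ∇G(z)` says exactly that `z` is a critical point of `A(s, x, ·)`, so by the chain rule
the derivative of `y` does not contribute to that of `Ĝ`: one differentiates `A` as if `y` were
constant. This gives `∂Ĝ/∂s = |y - x|² / (4s²)` and `∇ₓĜ = (y - x) / (2s) = ∇G(y)`.
-/

theorem hasFDerivAt_div {𝕜 E : Type*} [NontriviallyNormedField 𝕜] [NormedAddCommGroup E]
    [NormedSpace 𝕜 E] {a b : E → 𝕜} {a' b' : E →L[𝕜] 𝕜} {x : E} (ha : HasFDerivAt a a' x)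
    (hb : HasFDerivAt b b' x) (hx : b x ≠ 0) :
    HasFDerivAt (fun u ↦ a u / b u) ((b x ^ 2)⁻¹ • (b x • a' - a x • b')) x := by
  have hinv : HasFDerivAt (fun u ↦ (b u)⁻¹) (-(b x ^ 2)⁻¹ • b') x :=
    (hasDerivAt_inv hx).comp_hasFDerivAt x hb
  simp only [div_eq_mul_inv]
  refine (ha.mul hinv).congr_fderiv ?_
  ext v
  simp only [add_apply, sub_apply, smul_apply, smul_eq_mul]
  field_simp
  ring

section InnerProductSpace

variable {E : Type*} [NormedAddCommGroup E] [InnerProductSpace ℝ E]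

/-- The function whose critical value in `z` is the Hopf–Lax solution of `∂u/∂s = |∇u|²` with
initial datum `G`, namely `A(s, x, z) = -|z - x|² / (4s) + G(z)`. It is meant for `s ≠ 0`: at
`s = 0` Lean's division makes the first term zero. -/
noncomputable def hopfLaxAction (G : E → ℝ) (s : ℝ) (x z : E) : ℝ :=
  -‖z - x‖ ^ 2 / (4 * s) + G z

theorem hasFDerivAt_hopfLaxAction_of_critical {P : Type*} [NormedAddCommGroup P] [NormedSpace ℝ P]
    {G : E → ℝ} {g : E} {σ : P → ℝ} {ξ ζ : P → E} {σ' : P →L[ℝ] ℝ} {ξ' ζ' : P →L[ℝ] E} {p : P}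
    (hG : HasFDerivAt G (innerSL ℝ g) (ζ p)) (hσ : HasFDerivAt σ σ' p)
    (hξ : HasFDerivAt ξ ξ' p) (hζ : HasFDerivAt ζ ζ' p) (hs : σ p ≠ 0)
    (hcrit : ζ p - ξ p = (2 * σ p) • g) :
    HasFDerivAt (fun q ↦ hopfLaxAction G (σ q) (ξ q) (ζ q))
      (‖g‖ ^ 2 • σ' + (innerSL ℝ g).comp ξ') p := by
  have hnum : HasFDerivAt (fun q ↦ -‖ζ q - ξ q‖ ^ 2) _ p := (hζ.fun_sub hξ).norm_sq.fun_neg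
  have hden : HasFDerivAt (fun q ↦ 4 * σ q) _ p := hσ.const_mul 4
  refine ((hasFDerivAt_div hnum hden (by simpa using hs)).fun_add (hG.comp p hζ)).congr_fderiv ?_
  ext v
  simp only [hcrit, norm_smul, norm_mul, Real.norm_eq_abs, mul_pow, sq_abs, map_smul, map_sub,
    add_apply, sub_apply, neg_apply, smul_apply, ContinuousLinearMap.comp_apply,
    smul_eq_mul, nsmul_eq_mul, Nat.cast_ofNat]
  field_simp
  ring

end InnerProductSpace

section Slices

variable {𝕜 E F : Type*} [NontriviallyNormedField 𝕜] [NormedAddCommGroup E] [NormedSpace 𝕜 E]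
  [NormedAddCommGroup F] [NormedSpace 𝕜 F]

theorem hasDerivAt_slice_fst {f : 𝕜 × E → F} {f' : 𝕜 × E →L[𝕜] F} {p : 𝕜 × E}
    (hf : HasFDerivAt f f' p) : HasDerivAt (fun t ↦ f (t, p.2)) (f' (1, 0)) p.1 :=
  hf.comp_hasDerivAt p.1 ((hasDerivAt_id p.1).prodMk (hasDerivAt_const p.1 p.2))

theorem hasDerivAt_slice_snd_update {ι : Type*} [Finite ι] [DecidableEq ι]
    {f : E × (ι → 𝕜) → F} {f' : E × (ι → 𝕜) →L[𝕜] F} {p : E × (ι → 𝕜)}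
    (hf : HasFDerivAt f f' p) (i : ι) :
    HasDerivAt (fun v ↦ f (p.1, Function.update p.2 i v)) (f' (0, Pi.single i 1)) (p.2 i) := by
  have := Fintype.ofFinite ι
  exact HasFDerivAt.comp_hasDerivAt_of_eq (p.2 i) hf
    ((hasDerivAt_const (p.2 i) p.1).prodMk (hasDerivAt_update p.2 i (p.2 i))) (by simp)

end Slices

theorem hasFDerivAt_comp_sum {𝕜 ι : Type*} [NontriviallyNormedField 𝕜] [Fintype ι] {f : 𝕜 → 𝕜}
    {f' : 𝕜} {z : ι → 𝕜} (hf : HasDerivAt f f' (∑ j, z j)) :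
    HasFDerivAt (fun w : ι → 𝕜 ↦ f (∑ j, w j))
      (f' • ∑ j, ContinuousLinearMap.proj (R := 𝕜) (φ := fun _ : ι ↦ 𝕜) j) z :=
  hf.comp_hasFDerivAt z (HasFDerivAt.fun_sum fun j _ ↦ hasFDerivAt_apply j z)

section Coordinates

variable {ι : Type*} [Fintype ι]

theorem hopfLaxAction_toLp (G : (ι → ℝ) → ℝ) (s : ℝ) (x z : ι → ℝ) :
    hopfLaxAction (fun w : EuclideanSpace ℝ ι ↦ G w.ofLp) s (WithLp.toLp 2 x) (WithLp.toLp 2 z) =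
      -(∑ i, (z i - x i) ^ 2) / (4 * s) + G z := by
  simp [hopfLaxAction, EuclideanSpace.norm_sq_eq]

variable [DecidableEq ι]

theorem innerSL_toLp_apply_single (L : (ι → ℝ) →L[ℝ] ℝ) :
    innerSL ℝ (WithLp.toLp 2 fun i ↦ L (Pi.single i 1)) =
      L.comp (PiLp.continuousLinearEquiv 2 ℝ fun _ : ι ↦ ℝ).toContinuousLinearMap := by
  ext v
  calc inner ℝ (WithLp.toLp 2 fun i ↦ L (Pi.single i 1)) v
      = ∑ i, v i * L (Pi.single i 1) := by simp [PiLp.inner_apply]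
    _ = L (∑ i, v i • Pi.single i 1) := by simp only [map_sum, map_smul, smul_eq_mul]
    _ = L v.ofLp := by rw [← pi_eq_sum_univ']

theorem hasFDerivAt_hopfLax_of_critical {G : (ι → ℝ) → ℝ} {G' : (ι → ℝ) →L[ℝ] ℝ}
    {y : ℝ × (ι → ℝ) → ι → ℝ} {p : ℝ × (ι → ℝ)} (hG : HasFDerivAt G G' (y p))
    (hs : p.1 ≠ 0) (hy : DifferentiableAt ℝ y p)
    (hcrit : ∀ i, y p i - p.2 i = 2 * p.1 * G' (Pi.single i 1)) :
    HasFDerivAt (fun q ↦ -(∑ i, (y q i - q.2 i) ^ 2) / (4 * q.1) + G (y q))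
      ((∑ i, G' (Pi.single i 1) ^ 2) • ContinuousLinearMap.fst ℝ ℝ (ι → ℝ) +
        G'.comp (ContinuousLinearMap.snd ℝ ℝ (ι → ℝ))) p := by
  have hG_ofLp : HasFDerivAt (fun w : EuclideanSpace ℝ ι ↦ G w.ofLp)
      (innerSL ℝ (WithLp.toLp 2 fun i ↦ G' (Pi.single i 1))) (WithLp.toLp 2 (y p)) := by
    rw [innerSL_toLp_apply_single]
    exact HasFDerivAt.comp (WithLp.toLp 2 (y p)) hG (PiLp.hasFDerivAt_ofLp 2 _)
  have hx_toLp : HasFDerivAt (fun q : ℝ × (ι → ℝ) ↦ WithLp.toLp 2 q.2) _ p :=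
    (PiLp.hasFDerivAt_toLp (𝕜 := ℝ) 2 p.2).comp p hasFDerivAt_snd
  have hy_toLp : HasFDerivAt (fun q ↦ WithLp.toLp 2 (y q)) _ p :=
    (PiLp.hasFDerivAt_toLp (𝕜 := ℝ) 2 (y p)).comp p hy.hasFDerivAt
  have hcrit_toLp : WithLp.toLp 2 (y p) - WithLp.toLp 2 p.2 =
      (2 * p.1) • WithLp.toLp 2 fun i ↦ G' (Pi.single i 1) := by
    ext i
    exact hcrit i
  have haction := hasFDerivAt_hopfLaxAction_of_critical (ζ := fun q ↦ WithLp.toLp 2 (y q))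
    hG_ofLp hasFDerivAt_fst hx_toLp hy_toLp hs hcrit_toLp
  simp only [hopfLaxAction_toLp] at haction
  refine haction.congr_fderiv ?_
  rw [← ContinuousLinearMap.comp_assoc, innerSL_toLp_apply_single, EuclideanSpace.norm_sq_eq]
  ext v <;> simp [PiLp.coe_continuousLinearEquiv]

end Coordinates

theorem hopf_lax_solves_HJ_general {ι : Type*} [Fintype ι] [DecidableEq ι]
    {G : (ι → ℝ) → ℝ} {G' : (ι → ℝ) →L[ℝ] ℝ} {y : ℝ × (ι → ℝ) → ι → ℝ} {p : ℝ × (ι → ℝ)}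
    (hG : HasFDerivAt G G' (y p)) (hs : p.1 ≠ 0) (hy : DifferentiableAt ℝ y p)
    (hcrit : ∀ i, y p i - p.2 i = 2 * p.1 * G' (Pi.single i 1)) {Ghat : ℝ × (ι → ℝ) → ℝ}
    (hGhat : ∀ q, Ghat q = -(∑ i, (y q i - q.2 i) ^ 2) / (4 * q.1) + G (y q)) :
    (∀ i, HasDerivAt (fun v ↦ Ghat (p.1, Function.update p.2 i v)) (G' (Pi.single i 1)) (p.2 i)) ∧
      HasDerivAt (fun t ↦ Ghat (t, p.2)) ((∑ i, (y p i - p.2 i) ^ 2) / (4 * p.1 ^ 2)) p.1 ∧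
      deriv (fun t ↦ Ghat (t, p.2)) p.1 =
        ∑ i, (deriv (fun v ↦ Ghat (p.1, Function.update p.2 i v)) (p.2 i)) ^ 2 := by
  have hfderiv := hasFDerivAt_hopfLax_of_critical hG hs hy hcrit
  rw [← funext hGhat] at hfderiv
  have hspace (i : ι) : HasDerivAt (fun v ↦ Ghat (p.1, Function.update p.2 i v))
      (G' (Pi.single i 1)) (p.2 i) := by
    simpa using hasDerivAt_slice_snd_update hfderiv i
  have htime : HasDerivAt (fun t ↦ Ghat (t, p.2)) (∑ i, G' (Pi.single i 1) ^ 2) p.1 := by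
    simpa using hasDerivAt_slice_fst hfderiv
  have hgrad_sq : (∑ i, (y p i - p.2 i) ^ 2) / (4 * p.1 ^ 2) = ∑ i, G' (Pi.single i 1) ^ 2 := by
    simp only [hcrit, mul_pow, ← Finset.mul_sum]
    field_simp
    ring
  exact ⟨hspace, hgrad_sq ▸ htime, by simp only [htime.deriv, (hspace _).deriv]⟩

/-- the Hopf–Lax type function `Ĝ` built from the implicit minimizer `y`
has partial derivatives `∂Ĝ/∂x_i = G*'(⟨y⟩)` and `∂Ĝ/∂s = |y-x|²/(4s²)`, so it solves the
Hamilton–Jacobi equation `∂Ĝ/∂s = |∇ₓĜ|²`. -/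
theorem hopf_lax_solves_HJ
    (d : ℕ) (hd : 1 ≤ d) (Gs : ℝ → ℝ) (hGs : ContDiff ℝ 1 Gs)
    (D : Set (ℝ × (Fin d → ℝ))) (hD : IsOpen D) (hDneg : ∀ p ∈ D, p.1 < 0)
    (y : ℝ × (Fin d → ℝ) → (Fin d → ℝ)) (hy : DifferentiableOn ℝ y D)
    (hyeq : ∀ p ∈ D, ∀ i : Fin d,
      y p i - p.2 i = 2 * p.1 * deriv Gs (∑ j, y p j))
    (Ghat : ℝ × (Fin d → ℝ) → ℝ)
    (hGhat : ∀ p : ℝ × (Fin d → ℝ),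
      Ghat p = -(∑ i, (y p i - p.2 i) ^ 2) / (4 * p.1) + Gs (∑ j, y p j)) :
    ∀ p ∈ D,
      (∀ i : Fin d, HasDerivAt (fun v => Ghat (p.1, Function.update p.2 i v))
        (deriv Gs (∑ j, y p j)) (p.2 i)) ∧
      HasDerivAt (fun t => Ghat (t, p.2))
        ((∑ i, (y p i - p.2 i) ^ 2) / (4 * p.1 ^ 2)) p.1 ∧
      deriv (fun t => Ghat (t, p.2)) p.1 =
        ∑ i : Fin d, (deriv (fun v => Ghat (p.1, Function.update p.2 i v)) (p.2 i)) ^ 2 := by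
  intro p hp
  simpa using hopf_lax_solves_HJ_general
    (hasFDerivAt_comp_sum (hGs.differentiable one_ne_zero _).hasDerivAt) (hDneg p hp).ne
    (hy.differentiableAt (hD.mem_nhds hp)) (by simpa using hyeq p hp) hGhat
end

section
/- Let d ≥ 1 be an integer, θ, r > 0, and fix a nonzero multi-index α ∈ ℕ^d. Define Â_α(k) := (2d)^k r^{k+1} θ^{2k+|α|} Γ((r+2)k + r + |α|) / ( α! (k+1)! Γ((r+1)(k+1)) ) for k ≥ 0. Then the ratio Â_α(k−1)/Â_α(k) converges as k → ∞, and lim_{k→∞} Â_α(k−1)/Â_α(k) = (r+1)^{r+1} / ( 2 θ² r (r+2)^{r+2} d ). In particular the radius of convergence of the power series Σ_{k≥0} Â_α(k) s^k equals (r+1)^{r+1} / ( 2 θ² r (r+2)^{r+2} d ). -/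
/-!
By log-convexity, `Γ (x + a) / Γ x ∼ x ^ a` as `x → ∞` for `a ∈ [0, 1]`, and such equivalences are
stable under addition and negation of the shift `a`. Up to a geometric factor, the coefficients are
`Γ (a k + p) / (Γ (b k + q) Γ (c k + s))` with `a = r + 2`, `b = r + 1`, `c = 1`. Advancing `k` by
one multiplies `Γ (a k + p)` by a factor equivalent to `(a k) ^ a`; because `a = b + c`, the powers
of `k` cancel in the ratio of consecutive coefficients, leaving `b ^ b * c ^ c / a ^ a`.
-/

open Filter Topology Asymptotics FormalMultilinearSeries

section PowerAsymptotics

lemma isEquivalent_rpow_of_eventually_nonneg {ι : Type*} {l : Filter ι} {u v : ι → ℝ}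
    (huv : u ~[l] v) (hv : ∀ᶠ x in l, 0 ≤ v x) (s : ℝ) :
    (fun x ↦ u x ^ s) ~[l] fun x ↦ v x ^ s := by
  have habs : v =ᶠ[l] fun x ↦ |v x| := hv.mono fun x hx ↦ (abs_of_nonneg hx).symm
  have hpow : (fun x ↦ |v x| ^ s) =ᶠ[l] fun x ↦ v x ^ s := habs.symm.fun_comp (· ^ s)
  exact (IsEquivalent.rpow (fun x ↦ abs_nonneg (v x)) (huv.trans_eventuallyEq habs)
    ).trans_eventuallyEq hpow

lemma add_const_rpow_isEquivalent (a s : ℝ) :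
    (fun x : ℝ ↦ (x + a) ^ s) ~[atTop] fun x ↦ x ^ s :=
  isEquivalent_rpow_of_eventually_nonneg
    (IsEquivalent.refl.add_const_of_norm_tendsto_atTop tendsto_norm_atTop_atTop)
    (eventually_ge_atTop 0) s

end PowerAsymptotics

section GammaAsymptotics

variable {a b x : ℝ}

lemma gamma_add_le_gamma_mul_rpow (hx : 0 < x) (ha₀ : 0 ≤ a) (ha₁ : a ≤ 1) :
    Real.Gamma (x + a) ≤ Real.Gamma x * x ^ a := by
  have hΓ := Real.Gamma_pos_of_pos hx
  have hconv := Real.convexOn_log_Gamma.2 hx (add_pos hx one_pos) (sub_nonneg.2 ha₁) ha₀ (by ring)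
  rw [show (1 - a) • x + a • (x + 1) = x + a by simp only [smul_eq_mul]; ring] at hconv
  simp only [Function.comp_apply, smul_eq_mul, Real.Gamma_add_one hx.ne',
    Real.log_mul hx.ne' hΓ.ne'] at hconv
  rw [← Real.log_le_log_iff (Real.Gamma_pos_of_pos (by positivity)) (by positivity),
    Real.log_mul hΓ.ne' (by positivity), Real.log_rpow hx]
  linarith

lemma mul_rpow_le_gamma_add_div_gamma (hx : 0 < x) (ha₀ : 0 ≤ a) (ha₁ : a ≤ 1) :
    x * (x + a) ^ (a - 1) ≤ Real.Gamma (x + a) / Real.Gamma x := by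
  have hxa : 0 < x + a := by positivity
  have hwendel := gamma_add_le_gamma_mul_rpow hxa (sub_nonneg.2 ha₁) (sub_le_self 1 ha₀)
  rw [add_add_sub_cancel, Real.Gamma_add_one hx.ne'] at hwendel
  rw [le_div_iff₀ (Real.Gamma_pos_of_pos hx), ← neg_sub 1 a, Real.rpow_neg hxa.le,
    ← div_eq_mul_inv, div_mul_eq_mul_div, div_le_iff₀ (by positivity)]
  exact hwendel

lemma gamma_add_div_gamma_isEquivalent_of_le_one (ha₀ : 0 ≤ a) (ha₁ : a ≤ 1) :
    (fun x ↦ Real.Gamma (x + a) / Real.Gamma x) ~[atTop] fun x ↦ x ^ a := by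
  have hlower : (fun x : ℝ ↦ x * (x + a) ^ (a - 1)) ~[atTop] fun x ↦ x ^ a := by
    refine (IsEquivalent.refl.mul (add_const_rpow_isEquivalent a (a - 1))).trans_eventuallyEq ?_
    filter_upwards [eventually_gt_atTop 0] with x hx
    simp [Real.rpow_sub_one hx.ne', mul_div_cancel₀ _ hx.ne']
  have hne : ∀ᶠ x : ℝ in atTop, x ^ a ≠ 0 :=
    (eventually_gt_atTop 0).mono fun x hx ↦ (Real.rpow_pos_of_pos hx a).ne'
  refine isEquivalent_of_tendsto_one (tendsto_of_tendsto_of_tendsto_of_le_of_le'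
    ((isEquivalent_iff_tendsto_one hne).1 hlower) tendsto_const_nhds ?_ ?_)
  · filter_upwards [eventually_gt_atTop 0] with x hx
    simp only [Pi.div_apply]
    gcongr
    exact mul_rpow_le_gamma_add_div_gamma hx ha₀ ha₁
  · filter_upwards [eventually_gt_atTop 0] with x hx
    rw [Pi.div_apply, div_div, div_le_one (by positivity [Real.Gamma_pos_of_pos hx])]
    exact gamma_add_le_gamma_mul_rpow hx ha₀ ha₁

lemma gamma_shift_add_div_gamma_shift_isEquivalent
    (ha : (fun x ↦ Real.Gamma (x + a) / Real.Gamma x) ~[atTop] fun x ↦ x ^ a) (p : ℝ) :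
    (fun x ↦ Real.Gamma (x + p + a) / Real.Gamma (x + p)) ~[atTop] fun x ↦ x ^ a :=
  (ha.comp_tendsto (tendsto_atTop_add_const_right _ p tendsto_id)).trans
    (add_const_rpow_isEquivalent p a)

lemma gamma_add_div_gamma_isEquivalent_add
    (ha : (fun x ↦ Real.Gamma (x + a) / Real.Gamma x) ~[atTop] fun x ↦ x ^ a)
    (hb : (fun x ↦ Real.Gamma (x + b) / Real.Gamma x) ~[atTop] fun x ↦ x ^ b) :
    (fun x ↦ Real.Gamma (x + (a + b)) / Real.Gamma x) ~[atTop] fun x ↦ x ^ (a + b) := by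
  refine ((ha.mul (gamma_shift_add_div_gamma_shift_isEquivalent hb a)).congr_left ?_
    ).congr_right ?_
  · filter_upwards [eventually_gt_atTop (-a)] with x hx
    have hΓ : Real.Gamma (x + a) ≠ 0 := (Real.Gamma_pos_of_pos (by linarith)).ne'
    rw [Pi.mul_apply, mul_comm, div_mul_div_cancel₀ hΓ, add_assoc]
  · filter_upwards [eventually_gt_atTop 0] with x hx
    exact (Real.rpow_add hx a b).symm

lemma gamma_add_div_gamma_isEquivalent_neg
    (ha : (fun x ↦ Real.Gamma (x + a) / Real.Gamma x) ~[atTop] fun x ↦ x ^ a) :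
    (fun x ↦ Real.Gamma (x + -a) / Real.Gamma x) ~[atTop] fun x ↦ x ^ (-a) := by
  refine ((gamma_shift_add_div_gamma_shift_isEquivalent ha (-a)).inv.congr_left
    (.of_forall fun x ↦ ?_)).congr_right ?_
  · rw [Pi.inv_apply, inv_div, neg_add_cancel_right]
  · filter_upwards [eventually_gt_atTop 0] with x hx
    exact (Real.rpow_neg hx.le a).symm

theorem gamma_add_div_gamma_isEquivalent (a : ℝ) :
    (fun x ↦ Real.Gamma (x + a) / Real.Gamma x) ~[atTop] fun x ↦ x ^ a := by
  have hone := gamma_add_div_gamma_isEquivalent_of_le_one zero_le_one le_rfl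
  have hadd_int (n : ℤ) :
      (fun x ↦ Real.Gamma (x + n) / Real.Gamma x) ~[atTop] fun x ↦ x ^ (n : ℝ) := by
    induction n with
    | zero => simpa using gamma_add_div_gamma_isEquivalent_of_le_one le_rfl zero_le_one
    | succ n ih => simpa using gamma_add_div_gamma_isEquivalent_add ih hone
    | pred n ih =>
      simpa [sub_eq_add_neg] using
        gamma_add_div_gamma_isEquivalent_add ih (gamma_add_div_gamma_isEquivalent_neg hone)
  rw [← Int.floor_add_fract a]
  exact gamma_add_div_gamma_isEquivalent_add (hadd_int _)
    (gamma_add_div_gamma_isEquivalent_of_le_one (Int.fract_nonneg a) (Int.fract_lt_one a).le)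

lemma gamma_linear_succ_div_isEquivalent (ha : 0 < a) (p : ℝ) :
    (fun x ↦ Real.Gamma (a * (x + 1) + p) / Real.Gamma (a * x + p)) ~[atTop]
      fun x ↦ (a * x) ^ a := by
  refine ((gamma_shift_add_div_gamma_shift_isEquivalent (gamma_add_div_gamma_isEquivalent a)
    p).comp_tendsto (tendsto_id.const_mul_atTop ha)).congr_left (.of_forall fun x ↦ ?_)
  simp only [Function.comp_apply, id_eq]
  ring_nf

end GammaAsymptotics

section FoxWright

/-- The balanced Fox–Wright coefficient `Γ ((b + c) x + p) / (Γ (b x + q) Γ (c x + s))`, taken at a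
real index `x` so that asymptotics of `Γ` along `atTop` in `ℝ` apply. The slope of the numerator is
fixed to be the sum of the slopes of the denominator. -/
noncomputable def foxWrightCoeff (b c p q s x : ℝ) : ℝ :=
  Real.Gamma ((b + c) * x + p) / (Real.Gamma (b * x + q) * Real.Gamma (c * x + s))

lemma foxWrightCoeff_div_succ (b c p q s x : ℝ) :
    foxWrightCoeff b c p q s x / foxWrightCoeff b c p q s (x + 1) =
      Real.Gamma (b * (x + 1) + q) / Real.Gamma (b * x + q) *
        (Real.Gamma (c * (x + 1) + s) / Real.Gamma (c * x + s)) /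
        (Real.Gamma ((b + c) * (x + 1) + p) / Real.Gamma ((b + c) * x + p)) := by
  simp only [foxWrightCoeff, div_eq_mul_inv, mul_inv, inv_inv]
  ring

lemma mul_rpow_mul_rpow_div_rpow_add {b c x : ℝ} (hb : 0 ≤ b) (hc : 0 ≤ c) (hx : 0 < x) :
    (b * x) ^ b * (c * x) ^ c / ((b + c) * x) ^ (b + c) = b ^ b * c ^ c / (b + c) ^ (b + c) := by
  rw [Real.mul_rpow hb hx.le, Real.mul_rpow hc hx.le, Real.mul_rpow (add_nonneg hb hc) hx.le,
    mul_mul_mul_comm, ← Real.rpow_add hx, mul_div_mul_right _ _ (by positivity)]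

theorem tendsto_foxWrightCoeff_div_succ {b c : ℝ} (hb : 0 < b) (hc : 0 < c) (p q s : ℝ) :
    Tendsto (fun x ↦ foxWrightCoeff b c p q s x / foxWrightCoeff b c p q s (x + 1)) atTop
      (𝓝 (b ^ b * c ^ c / (b + c) ^ (b + c))) := by
  have hequiv := ((gamma_linear_succ_div_isEquivalent hb q).mul
    (gamma_linear_succ_div_isEquivalent hc s)).div
    (gamma_linear_succ_div_isEquivalent (add_pos hb hc) p)
  simp only [foxWrightCoeff_div_succ]
  refine (hequiv.trans_eventuallyEq ?_).tendsto_const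
  filter_upwards [eventually_gt_atTop 0] with x hx
  exact mul_rpow_mul_rpow_div_rpow_add hb.le hc.le hx

theorem tendsto_geometric_mul_foxWrightCoeff_div_succ {b c C w : ℝ} (hb : 0 < b) (hc : 0 < c)
    (hC : C ≠ 0) (hw : w ≠ 0) (p q s : ℝ) :
    Tendsto (fun n : ℕ ↦ C * w ^ n * foxWrightCoeff b c p q s n /
      (C * w ^ (n + 1) * foxWrightCoeff b c p q s (n + 1 : ℕ))) atTop
      (𝓝 (b ^ b * c ^ c / (b + c) ^ (b + c) / w)) := by
  refine (((tendsto_foxWrightCoeff_div_succ hb hc p q s).comp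
    tendsto_natCast_atTop_atTop).div_const w).congr fun n ↦ ?_
  rw [Function.comp_apply, Nat.cast_succ, pow_succ, ← mul_assoc, mul_assoc (C * w ^ n) w,
    mul_div_mul_left _ _ (by positivity), div_div, mul_comm w]

end FoxWright

section RadiusOfConvergence

variable {𝕜 : Type*} [NontriviallyNormedField 𝕜] {A : ℕ → 𝕜} {L s : 𝕜}

lemma ofScalars_radius_eq_nnnorm_of_tendsto_div_succ
    (hA : Tendsto (fun n ↦ A n / A (n + 1)) atTop (𝓝 L)) (hL : L ≠ 0) :
    (ofScalars 𝕜 A).radius = ‖L‖₊ :=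
  ofScalars_radius_eq_of_tendsto 𝕜 A (nnnorm_ne_zero_iff.2 hL) (by simpa using hA.norm)

lemma summable_mul_pow_of_nnnorm_lt_ofScalars_radius [CompleteSpace 𝕜]
    (hs : ‖s‖₊ < (ofScalars 𝕜 A).radius) : Summable fun n ↦ A n * s ^ n := by
  simpa [mul_comm] using (ofScalars 𝕜 A).summable (x := s) (by simpa [enorm_eq_nnnorm] using hs)

lemma not_summable_mul_pow_of_ofScalars_radius_lt_nnnorm
    (hs : (ofScalars 𝕜 A).radius < ‖s‖₊) : ¬ Summable fun n ↦ A n * s ^ n := fun hsum ↦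
  hs.not_ge <| (ofScalars 𝕜 A).le_radius_of_tendsto <| by
    simpa using hsum.tendsto_atTop_zero.norm

end RadiusOfConvergence

section GammaFormula

lemma gamma_formula_eq_geometric_mul_foxWrightCoeff (r θ D P : ℝ) (m k : ℕ) :
    (2 * D) ^ k * r ^ (k + 1) * θ ^ (2 * k + m) * Real.Gamma ((r + 2) * k + r + m) /
        (P * (k + 1).factorial * Real.Gamma ((r + 1) * (k + 1))) =
      r * θ ^ m / P * (2 * D * r * θ ^ 2) ^ k *
        foxWrightCoeff (r + 1) 1 (r + m) (r + 1) 2 k := by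
  have hfactorial : Real.Gamma (1 * k + 2) = (k + 1).factorial := by
    rw [← Real.Gamma_nat_eq_factorial]
    push_cast
    ring_nf
  have hnumerator : (r + 1 + 1) * (k : ℝ) + (r + m) = (r + 2) * k + r + m := by ring
  rw [foxWrightCoeff, hfactorial, hnumerator, ← mul_add_one (r + 1)]
  ring

lemma foxWright_limit_div_eq (r θ D : ℝ) :
    (r + 1) ^ (r + 1) * 1 ^ (1 : ℝ) / (r + 1 + 1) ^ (r + 1 + 1) / (2 * D * r * θ ^ 2) =
      (r + 1) ^ (r + 1) / (2 * θ ^ 2 * r * (r + 2) ^ (r + 2) * D) := by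
  rw [Real.one_rpow, mul_one, show r + 1 + 1 = r + 2 by ring, div_div]
  ring_nf

end GammaFormula

theorem hat_A_gamma_radius_of_convergence_general
    (d : ℕ) (hd : 1 ≤ d) (θ r : ℝ) (hθ : θ ≠ 0) (hr : -1 < r) (hr₀ : r ≠ 0)
    (α : Fin d → ℕ)
    (A : ℕ → ℝ)
    (hA : ∀ k : ℕ,
      A k = (2 * (d : ℝ)) ^ k * r ^ (k + 1) * θ ^ (2 * k + ∑ i, α i) *
        Real.Gamma ((r + 2) * k + r + (∑ i, α i : ℕ)) /
        (((∏ i, Nat.factorial (α i) : ℕ) : ℝ) * (Nat.factorial (k + 1) : ℝ) *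
          Real.Gamma ((r + 1) * ((k : ℝ) + 1)))) :
    Tendsto (fun k : ℕ ↦ A (k - 1) / A k) atTop
      (𝓝 ((r + 1) ^ (r + 1) / (2 * θ ^ 2 * r * (r + 2) ^ (r + 2) * d))) ∧
    (∀ s : ℝ, |s| < |(r + 1) ^ (r + 1) / (2 * θ ^ 2 * r * (r + 2) ^ (r + 2) * d)| →
      Summable (fun k : ℕ ↦ A k * s ^ k)) ∧
    (∀ s : ℝ, |(r + 1) ^ (r + 1) / (2 * θ ^ 2 * r * (r + 2) ^ (r + 2) * d)| < |s| →
      ¬ Summable (fun k : ℕ ↦ A k * s ^ k)) := by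
  set L := (r + 1) ^ (r + 1) / (2 * θ ^ 2 * r * (r + 2) ^ (r + 2) * d) with hL
  have hr₁ : 0 < r + 1 := by linarith
  have hr₂ : 0 < r + 2 := by linarith
  have hC : r * θ ^ (∑ i, α i) / (∏ i, (α i).factorial : ℕ) ≠ 0 := by positivity
  have hlim : Tendsto (fun k ↦ A k / A (k + 1)) atTop (𝓝 L) := by
    simp only [hA, gamma_formula_eq_geometric_mul_foxWrightCoeff, hL, ← foxWright_limit_div_eq]
    exact tendsto_geometric_mul_foxWrightCoeff_div_succ hr₁ one_pos hC (by positivity) _ _ _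
  have hradius := ofScalars_radius_eq_nnnorm_of_tendsto_div_succ hlim (by positivity)
  refine ⟨(tendsto_add_atTop_iff_nat 1).1 hlim, fun s hs ↦ ?_, fun s hs ↦ ?_⟩
  · exact summable_mul_pow_of_nnnorm_lt_ofScalars_radius (hradius ▸ mod_cast hs)
  · exact not_summable_mul_pow_of_ofScalars_radius_lt_nnnorm (hradius ▸ mod_cast hs)

/-- ratio limit and radius of convergence for the Gamma-formula coefficients
in the factorial-growth case. -/
theorem hat_A_gamma_radius_of_convergence
    (d : ℕ) (hd : 1 ≤ d) (θ r : ℝ) (hθ : 0 < θ) (hr : 0 < r)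
    (α : Fin d → ℕ) (hα : α ≠ 0)
    (A : ℕ → ℝ)
    (hA : ∀ k : ℕ,
      A k = (2 * (d : ℝ)) ^ k * r ^ (k + 1) * θ ^ (2 * k + ∑ i, α i) *
        Real.Gamma ((r + 2) * k + r + (∑ i, α i : ℕ)) /
        (((∏ i, Nat.factorial (α i) : ℕ) : ℝ) * (Nat.factorial (k + 1) : ℝ) *
          Real.Gamma ((r + 1) * ((k : ℝ) + 1)))) :
    Filter.Tendsto (fun k : ℕ => A (k - 1) / A k) Filter.atTop
      (nhds ((r + 1) ^ (r + 1) / (2 * θ ^ 2 * r * (r + 2) ^ (r + 2) * d))) ∧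
    (∀ s : ℝ, |s| < (r + 1) ^ (r + 1) / (2 * θ ^ 2 * r * (r + 2) ^ (r + 2) * d) →
      Summable (fun k : ℕ => A k * s ^ k)) ∧
    (∀ s : ℝ, (r + 1) ^ (r + 1) / (2 * θ ^ 2 * r * (r + 2) ^ (r + 2) * d) < |s| →
      ¬ Summable (fun k : ℕ => A k * s ^ k)) := by
  have hL : 0 ≤ (r + 1) ^ (r + 1) / (2 * θ ^ 2 * r * (r + 2) ^ (r + 2) * d) := by positivity
  simpa only [abs_of_nonneg hL] using
    hat_A_gamma_radius_of_convergence_general d hd θ r hθ.ne' (by linarith) hr.ne' α A hA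
end

section
/- Let θ > 0 and r > 0 be real numbers. Then for every real y with 0 < y < 1/(θ(r+2)), one has 1 < (2 − θ(r+2) y) / ( 2 (1 − θ y)^{r+1} ) < (1/2) ((r+2)/(r+1))^{r+1}, where powers with real exponent r+1 are taken of positive bases. -/
/-!
In the variable `x = θ y` the ratio depends on `r` alone. For `x < 1` its derivative has the
sign of `r (1 - (r + 2) x)`, so for `r > 0` it increases strictly up to `x = 1 / (r + 2)`, and the
two bounds are its values at `0` and `1 / (r + 2)`.
-/

open Set

/-- The ratio of the theorem in the rescaled variable `x = θ y`, which eliminates `θ`; it is of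
interest for `x < 1`, where the base `1 - x` of the power is positive. -/
noncomputable def G0Ratio (r x : ℝ) : ℝ :=
  (2 - (r + 2) * x) / (2 * (1 - x) ^ (r + 1))

theorem G0Ratio_zero (r : ℝ) : G0Ratio r 0 = 1 := by
  simp [G0Ratio]

theorem G0Ratio_one_div_add_two {r : ℝ} (hr : -1 < r) :
    G0Ratio r (1 / (r + 2)) = (1 / 2) * ((r + 2) / (r + 1)) ^ (r + 1) := by
  have hr₁ : 0 < r + 1 := by linarith
  have hr₂ : 0 < r + 2 := by linarith
  have base_eq : 1 - 1 / (r + 2) = ((r + 2) / (r + 1))⁻¹ := by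
    field_simp
    ring
  have numerator_eq : 2 - (r + 2) * (1 / (r + 2)) = 1 := by
    rw [mul_one_div_cancel hr₂.ne']
    norm_num
  rw [G0Ratio, base_eq, numerator_eq, Real.inv_rpow (by positivity), one_div_mul_eq_div,
    ← div_eq_mul_inv, one_div_div]

theorem hasDerivAt_G0Ratio (r : ℝ) {x : ℝ} (hx : x < 1) :
    HasDerivAt (G0Ratio r) (r * (1 - (r + 2) * x) / (2 * (1 - x) ^ (r + 2))) x := by
  have base_pos : 0 < 1 - x := sub_pos.2 hx
  have pow_add_one : (1 - x) ^ (r + 1) = (1 - x) ^ r * (1 - x) :=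
    Real.rpow_add_one base_pos.ne' r
  have pow_add_two : (1 - x) ^ (r + 2) = (1 - x) ^ r * (1 - x) ^ 2 :=
    Real.rpow_add_natCast base_pos.ne' r 2
  have deriv_numerator : HasDerivAt (fun t ↦ 2 - (r + 2) * t) (-(r + 2)) x := by
    simpa using ((hasDerivAt_id x).const_mul (r + 2)).const_sub 2
  have deriv_denominator :
      HasDerivAt (fun t ↦ 2 * (1 - t) ^ (r + 1)) (2 * (-(r + 1) * (1 - x) ^ r)) x := by
    simpa using (((hasDerivAt_id x).const_sub 1).rpow_const (p := r + 1)
      (Or.inl base_pos.ne')).const_mul 2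
  refine (deriv_numerator.div deriv_denominator (by positivity)).congr_deriv ?_
  rw [pow_add_one, pow_add_two]
  field_simp
  ring

theorem strictMonoOn_G0Ratio {r : ℝ} (hr : 0 < r) :
    StrictMonoOn (G0Ratio r) (Iic (1 / (r + 2))) := by
  have hr₂ : 0 < r + 2 := by linarith
  have lt_one {x : ℝ} (hx : x ≤ 1 / (r + 2)) : x < 1 :=
    hx.trans_lt ((div_lt_one hr₂).2 (by linarith))
  refine strictMonoOn_of_deriv_pos (convex_Iic _)
    (fun x hx ↦ (hasDerivAt_G0Ratio r (lt_one hx)).continuousAt.continuousWithinAt) fun x hx ↦ ?_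
  rw [interior_Iic, mem_Iio] at hx
  have base_pos : 0 < 1 - x := sub_pos.2 (lt_one hx.le)
  have factor_pos : 0 < 1 - (r + 2) * x := sub_pos.2 ((lt_div_iff₀' hr₂).1 hx)
  rw [(hasDerivAt_G0Ratio r (lt_one hx.le)).deriv]
  positivity

/-- two-sided bound for `(2 − θ(r+2)y)/(2(1−θy)^{r+1})` on `0 < y < 1/(θ(r+2))`. -/
theorem G0_ratio_two_sided_bound
    (θ r : ℝ) (hθ : 0 < θ) (hr : 0 < r) :
    ∀ y : ℝ, 0 < y → y < 1 / (θ * (r + 2)) →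
      1 < (2 - θ * (r + 2) * y) / (2 * (1 - θ * y) ^ (r + 1)) ∧
      (2 - θ * (r + 2) * y) / (2 * (1 - θ * y) ^ (r + 1)) <
        (1 / 2) * ((r + 2) / (r + 1)) ^ (r + 1) := by
  intro y hy hy_lt
  have pos : 0 < θ * y := mul_pos hθ hy
  have lt_end : θ * y < 1 / (r + 2) := by
    rwa [← lt_div_iff₀' hθ, div_div, mul_comm (r + 2)]
  have ratio_eq : (2 - θ * (r + 2) * y) / (2 * (1 - θ * y) ^ (r + 1)) = G0Ratio r (θ * y) := by
    rw [G0Ratio, mul_left_comm, ← mul_assoc]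
  have mono := strictMonoOn_G0Ratio hr
  rw [ratio_eq, ← G0Ratio_one_div_add_two (by linarith)]
  exact ⟨(G0Ratio_zero r).symm.trans_lt (mono (pos.trans lt_end).le lt_end.le pos),
    mono lt_end.le self_mem_Iic lt_end⟩
end

section
/- For every integer k ≥ 1, Σ_{l=0}^{k} binom(k,l) (l+1)^{l−1} (k−l+1)^{k−l−1} = 2 (k+2)^{k−1}, where the exponents l−1 (for l = 0) and k−l−1 (for l = k) are interpreted so that 1^{−1} = 1 (equivalently, using truncated natural-number subtraction in the exponents gives the correct value since the base is 1 in those cases). -/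
/-!
Write `a_x(n) = x (x + n z) ^ (n - 1)` and `p_x(n) = (x + n z) ^ n`, and let `⋆` be binomial
convolution. The shift `f ↦ f (· + 1)` is a derivation for `⋆`, and it sends `a_x` to
`x • p_{x + z}`. Given Abel's identity `a_x ⋆ p_y = p_{x + y}`, the shift of `a_x ⋆ a_y` is
therefore `x • p_{x + y + z} + y • p_{x + y + z}`, which is the shift of `a_{x + y}`; so
`a_x ⋆ a_y = a_{x + y}`, and the claim is the case `x = y = z = 1`.

Abel's identity follows by induction, simultaneously with Cauchy's symmetry
`p_{x + z} ⋆ p_y = p_x ⋆ p_{y + z}`: the symmetry in degree `n` gives Abel's identity in degree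
`n + 1`, which in turn gives the symmetry there.
-/

open Finset

variable {R : Type*} [CommSemiring R]

section BinomialConvolution

/-- The binomial convolution of two sequences, that is, the sequence whose exponential generating
function is the product of theirs. -/
def binomialConv (f g : ℕ → R) (n : ℕ) : R :=
  ∑ p ∈ antidiagonal n, n.choose p.1 * (f p.1 * g p.2)

theorem binomialConv_eq_sum_range (f g : ℕ → R) (n : ℕ) :
    binomialConv f g n = ∑ i ∈ range (n + 1), n.choose i * (f i * g (n - i)) :=
  Nat.sum_antidiagonal_eq_sum_range_succ (fun i j ↦ n.choose i * (f i * g j)) n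

@[simp]
theorem binomialConv_zero (f g : ℕ → R) : binomialConv f g 0 = f 0 * g 0 := by
  simp [binomialConv]

theorem binomialConv_comm (f g : ℕ → R) (n : ℕ) : binomialConv f g n = binomialConv g f n := by
  rw [binomialConv, binomialConv, ← Nat.sum_antidiagonal_swap]
  refine sum_congr rfl fun p hp ↦ ?_
  rw [Prod.fst_swap, Prod.snd_swap, mul_comm (f _), ← Nat.choose_symm_of_eq_add
    (mem_antidiagonal.mp hp).symm]

theorem binomialConv_succ (f g : ℕ → R) (n : ℕ) :
    binomialConv f g (n + 1) =
      binomialConv (fun i ↦ f (i + 1)) g n + binomialConv f (fun j ↦ g (j + 1)) n := by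
  rw [binomialConv, sum_antidiagonal_choose_succ_mul (fun i j ↦ f i * g j), add_comm]
  congr 1
  exact sum_congr rfl fun p hp ↦ by rw [Nat.choose_symm_of_eq_add (mem_antidiagonal.mp hp).symm]

theorem binomialConv_add_left (f₁ f₂ g : ℕ → R) (n : ℕ) :
    binomialConv (fun i ↦ f₁ i + f₂ i) g n = binomialConv f₁ g n + binomialConv f₂ g n := by
  simp only [binomialConv, add_mul, mul_add, sum_add_distrib]

theorem binomialConv_const_mul_left (c : R) (f g : ℕ → R) (n : ℕ) :
    binomialConv (fun i ↦ c * f i) g n = c * binomialConv f g n := by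
  simp only [binomialConv, mul_sum, mul_assoc, mul_left_comm c]

theorem binomialConv_const_mul_right (c : R) (f g : ℕ → R) (n : ℕ) :
    binomialConv f (fun j ↦ c * g j) n = c * binomialConv f g n := by
  rw [binomialConv_comm, binomialConv_const_mul_left, binomialConv_comm]

/-- `i * f (i - 1)` has `X` times the exponential generating function of `f`. -/
theorem binomialConv_natCast_mul_pred_left (f g : ℕ → R) (n : ℕ) :
    binomialConv (fun i ↦ i * f (i - 1)) g (n + 1) = (n + 1) * binomialConv f g n := by
  have absorb (i : ℕ) : ((n + 1).choose (i + 1) : R) * (i + 1) = (n + 1) * n.choose i := by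
    exact_mod_cast congrArg (Nat.cast (R := R)) (Nat.add_one_mul_choose_eq n i).symm
  simp only [binomialConv, Nat.sum_antidiagonal_succ, Nat.cast_zero, zero_mul, mul_zero, zero_add,
    Nat.cast_succ, Nat.add_sub_cancel, mul_sum]
  refine sum_congr rfl fun p _ ↦ ?_
  rw [← mul_assoc ((n : R) + 1), ← absorb]
  ring

end BinomialConvolution

section Abel

/-- The Abel polynomial `A_n(x; -z) = x (x + n z) ^ (n - 1)`, evaluated in `R`. The value at
`n = 0` is `1`; the formula with truncated subtraction would give `x` there. -/
def abelPow (z x : R) : ℕ → R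
  | 0 => 1
  | n + 1 => x * (x + (n + 1) * z) ^ n

/-- The `n`-th power of the `n`-th term, counted from `0`, of the arithmetic progression
`x, x + z, x + 2 z, …`. Abel's identity convolves these powers with the values `abelPow`. -/
def progressionPow (z x : R) (n : ℕ) : R :=
  (x + n * z) ^ n

theorem abelPow_of_ne_zero (z x : R) {n : ℕ} (hn : n ≠ 0) :
    abelPow z x n = x * (x + n * z) ^ (n - 1) := by
  cases n with
  | zero => contradiction
  | succ n => simp [abelPow]

theorem abelPow_one_right (z : R) (n : ℕ) : abelPow z 1 n = (1 + n * z) ^ (n - 1) := by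
  cases n <;> simp [abelPow]

theorem abelPow_succ (z x : R) (n : ℕ) :
    abelPow z x (n + 1) = x * progressionPow z (x + z) n := by
  rw [abelPow, progressionPow]
  ring

theorem progressionPow_succ (z x : R) (n : ℕ) :
    progressionPow z x (n + 1) = (x + z + n * z) * progressionPow z (x + z) n := by
  simp only [progressionPow]
  push_cast
  ring

theorem abelPow_mul_add (z x : R) (n : ℕ) :
    abelPow z x n * (x + n * z) = x * progressionPow z x n := by
  cases n with
  | zero => simp [abelPow, progressionPow]
  | succ n => simp only [abelPow, progressionPow, pow_succ, Nat.cast_succ, mul_assoc]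

theorem progressionPow_eq_abelPow_add (z x : R) (n : ℕ) :
    progressionPow z x n = abelPow z x n + z * (n * progressionPow z (x + z) (n - 1)) := by
  cases n with
  | zero => simp [abelPow, progressionPow]
  | succ n =>
    rw [abelPow_succ, progressionPow_succ, Nat.add_sub_cancel]
    push_cast
    ring

theorem binomialConv_progressionPow_succ (z x y : R) (n : ℕ) :
    binomialConv (progressionPow z x) (progressionPow z y) (n + 1) =
      binomialConv (abelPow z x) (progressionPow z y) (n + 1) +
        z * ((n + 1) * binomialConv (progressionPow z (x + z)) (progressionPow z y) n) := by
  rw [funext (progressionPow_eq_abelPow_add z x), binomialConv_add_left,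
    binomialConv_const_mul_left, binomialConv_natCast_mul_pred_left]

theorem mul_binomialConv_progressionPow_add (z x y : R) (n : ℕ) :
    x * binomialConv (progressionPow z x) (progressionPow z y) n +
        binomialConv (abelPow z x) (fun j ↦ (y + j * z) * progressionPow z y j) n =
      (x + y + n * z) * binomialConv (abelPow z x) (progressionPow z y) n := by
  rw [← binomialConv_const_mul_left]
  simp only [← abelPow_mul_add, binomialConv, mul_sum, ← sum_add_distrib]
  refine sum_congr rfl fun p hp ↦ ?_
  rw [← mem_antidiagonal.mp hp]
  push_cast
  ring

theorem binomialConv_abelPow_progressionPow_and_symm (z : R) (n : ℕ) :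
    (∀ x y : R, binomialConv (abelPow z x) (progressionPow z y) n = progressionPow z (x + y) n) ∧
      ∀ x y : R, binomialConv (progressionPow z (x + z)) (progressionPow z y) n =
        binomialConv (progressionPow z x) (progressionPow z (y + z)) n := by
  induction n with
  | zero => simp [abelPow, progressionPow]
  | succ n ih =>
    obtain ⟨ih_abel, ih_symm⟩ := ih
    have abel_succ (x y : R) : binomialConv (abelPow z x) (progressionPow z y) (n + 1) =
        progressionPow z (x + y) (n + 1) := by
      simp only [binomialConv_succ, abelPow_succ, progressionPow_succ]
      rw [binomialConv_const_mul_left, ih_symm, mul_binomialConv_progressionPow_add, ih_abel,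
        ← add_assoc]
    refine ⟨abel_succ, fun x y ↦ ?_⟩
    rw [binomialConv_progressionPow_succ, binomialConv_progressionPow_succ, abel_succ, abel_succ,
      ih_symm, add_right_comm, add_assoc x y z]

theorem binomialConv_abelPow_progressionPow (z x y : R) (n : ℕ) :
    binomialConv (abelPow z x) (progressionPow z y) n = progressionPow z (x + y) n :=
  (binomialConv_abelPow_progressionPow_and_symm z n).1 x y

theorem abel_type_identity_general (z x y : R) (n : ℕ) :
    binomialConv (abelPow z x) (abelPow z y) n = abelPow z (x + y) n := by
  cases n with
  | zero => simp [abelPow]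
  | succ n =>
    calc binomialConv (abelPow z x) (abelPow z y) (n + 1)
      _ = x * binomialConv (abelPow z y) (progressionPow z (x + z)) n +
            y * binomialConv (abelPow z x) (progressionPow z (y + z)) n := by
        simp only [binomialConv_succ, abelPow_succ, binomialConv_const_mul_left,
          binomialConv_const_mul_right, binomialConv_comm (progressionPow z (x + z))]
      _ = (x + y) * progressionPow z (x + y + z) n := by
        rw [binomialConv_abelPow_progressionPow, binomialConv_abelPow_progressionPow,
          add_assoc x y z, add_mul, add_left_comm y x z]
      _ = abelPow z (x + y) (n + 1) := (abelPow_succ z (x + y) n).symm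

end Abel

/-- the Abel-type combinatorial identity
`Σ_{l=0}^k C(k,l)(l+1)^{l−1}(k−l+1)^{k−l−1} = 2(k+2)^{k−1}`
(with truncated natural subtraction in the exponents). -/
theorem abel_type_identity (k : ℕ) (hk : 1 ≤ k) :
    ∑ l ∈ Finset.range (k + 1),
        k.choose l * (l + 1) ^ (l - 1) * (k - l + 1) ^ (k - l - 1) =
      2 * (k + 2) ^ (k - 1) := by
  have abel_one_one := abel_type_identity_general 1 1 1 k
  rw [binomialConv_eq_sum_range, abelPow_of_ne_zero _ _ (Nat.one_le_iff_ne_zero.mp hk)]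
    at abel_one_one
  simpa [abelPow_one_right, add_comm, mul_assoc] using abel_one_one
end

section
/- For every integer d ≥ 1 and every multi-index α ∈ ℕ^d with |α| ≥ 1, the multinomial coefficient satisfies |α|!/α! < √2 · e^d · d^{|α| + d/2} / (√(2π|α|))^{d−1}. -/
/-!
Concavity of `log` gives `∫ x in k-1/2..k+1/2, log x ≤ log k`, hence the lower bound
`log k! ≥ (k + 1/2) log (k + 1/2) - k + log 2 / 2`, which unlike Stirling's formula also holds at
`k = 0`. By Jensen's inequality for `x log x`, the sum of these bounds over the entries of `α` is at
least its value when the shifted entries `α i + 1/2` all equal their mean `|α|/d + 1/2`.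
Together with `|α|! ≤ e √|α| (|α|/e)^|α|` this bounds the multinomial coefficient by
`e (2e)^(-d/2) d^(|α| + d/2) / √|α|^(d-1)`, and `√(2π) < e` takes care of the constants.
-/

open Finset Real

theorem intervalIntegral_le_mul_midpoint_of_concaveOn {f : ℝ → ℝ} {a b : ℝ} (hab : a ≤ b)
    (hf : ConcaveOn ℝ (Set.Icc a b) f) (hfi : IntervalIntegrable f MeasureTheory.volume a b) :
    ∫ x in a..b, f x ≤ (b - a) * f ((a + b) / 2) := by
  have hreflect : ∫ x in a..b, f (a + b - x) = ∫ x in a..b, f x := by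
    simp only [intervalIntegral.integral_comp_sub_left, add_sub_cancel_right, add_sub_cancel_left]
  have hfi' : IntervalIntegrable (fun x ↦ f (a + b - x)) MeasureTheory.volume a b := by
    simpa using (hfi.comp_sub_left (a + b)).symm
  have hmid : ∀ x ∈ Set.Icc a b, f x + f (a + b - x) ≤ 2 * f ((a + b) / 2) := by
    intro x hx
    have hx' : a + b - x ∈ Set.Icc a b := ⟨by linarith [hx.2], by linarith [hx.1]⟩
    have h := hf.2 hx hx' (by norm_num : (0 : ℝ) ≤ 1 / 2) (by norm_num : (0 : ℝ) ≤ 1 / 2)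
      (by norm_num)
    simp only [smul_eq_mul, one_div_mul_eq_div] at h
    rw [← add_div, ← add_div, add_sub_cancel] at h
    linarith
  have hsum := intervalIntegral.integral_mono_on hab (hfi.add hfi') intervalIntegrable_const hmid
  rw [intervalIntegral.integral_add hfi hfi', hreflect, intervalIntegral.integral_const,
    smul_eq_mul] at hsum
  linarith

theorem integral_log_le_mul_log_midpoint {a b : ℝ} (ha : 0 < a) (hab : a ≤ b) :
    ∫ x in a..b, log x ≤ (b - a) * log ((a + b) / 2) :=
  intervalIntegral_le_mul_midpoint_of_concaveOn hab
    (strictConcaveOn_log_Ioi.concaveOn.subset (fun _ hx ↦ ha.trans_le hx.1) (convex_Icc a b))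
    intervalIntegral.intervalIntegrable_log'

theorem integral_log_le_log_factorial (k : ℕ) :
    ∫ x in (1 / 2 : ℝ)..k + 1 / 2, log x ≤ log k.factorial := by
  induction k with
  | zero => simp
  | succ k ih =>
    have hstep : ∫ x in (k + 1 / 2 : ℝ)..(k + 1 : ℕ) + 1 / 2, log x ≤ log (k + 1 : ℕ) := by
      convert integral_log_le_mul_log_midpoint (a := k + 1 / 2) (b := (k + 1 : ℕ) + 1 / 2)
        (by positivity) (by push_cast; linarith) using 1
      push_cast
      ring_nf
    rw [← intervalIntegral.integral_add_adjacent_intervals (b := (k + 1 / 2 : ℝ))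
        intervalIntegral.intervalIntegrable_log' intervalIntegral.intervalIntegrable_log',
      Nat.factorial_succ, Nat.cast_mul, log_mul (by positivity) (by positivity)]
    linarith

theorem add_half_mul_log_sub_le_log_factorial (k : ℕ) :
    ((k : ℝ) + 1 / 2) * log (k + 1 / 2) - k + log 2 / 2 ≤ log k.factorial := by
  have h := integral_log_le_log_factorial k
  rw [integral_log, one_div, log_inv] at h
  rw [one_div]
  linarith

theorem log_factorial_le {n : ℕ} (hn : n ≠ 0) :
    log n.factorial ≤ n * log n - n + log n / 2 + 1 := by
  obtain ⟨m, rfl⟩ := Nat.exists_eq_succ_of_ne_zero hn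
  have h := Stirling.log_stirlingSeq'_antitone (Nat.zero_le m)
  have hm : ((m.succ : ℕ) : ℝ) ≠ 0 := by positivity
  rw [Function.comp_apply, Function.comp_apply, Function.comp_apply, Function.comp_apply,
    Stirling.log_stirlingSeq_formula, Stirling.stirlingSeq_one, log_div (exp_ne_zero 1) (by simp),
    log_sqrt zero_le_two, log_mul two_ne_zero hm, log_div hm (exp_ne_zero 1), log_exp] at h
  linarith

theorem add_mul_log_add_le {x y : ℝ} (hx : 0 < x) (hy : 0 ≤ y) :
    (x + y) * log x + y ≤ (x + y) * log (x + y) := by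
  have hxy : 0 < x + y := by positivity
  have hlog : 1 - ((x + y) / x)⁻¹ ≤ log (x + y) - log x := by
    rw [← log_div hxy.ne' hx.ne']
    exact one_sub_inv_le_log_of_pos (by positivity)
  calc
    (x + y) * log x + y = (x + y) * (log x + (1 - ((x + y) / x)⁻¹)) := by field_simp; ring
    _ ≤ (x + y) * log (x + y) := by gcongr; linarith

section Multinomial

variable {ι : Type*} (s : Finset ι)

theorem sum_mul_log_sum_div_card_le {x : ι → ℝ} (hx : ∀ i ∈ s, 0 ≤ x i) :
    (∑ i ∈ s, x i) * log ((∑ i ∈ s, x i) / #s) ≤ ∑ i ∈ s, x i * log (x i) := by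
  obtain rfl | hs := s.eq_empty_or_nonempty
  · simp
  have hcard : (0 : ℝ) < #s := by exact_mod_cast hs.card_pos
  have hjensen := convexOn_mul_log.map_sum_le (t := s) (w := fun _ ↦ (#s : ℝ)⁻¹) (p := x)
    (fun _ _ ↦ by positivity) (by simp [hcard.ne']) hx
  simp only [smul_eq_mul, ← mul_sum] at hjensen
  rwa [mul_assoc, mul_le_mul_iff_right₀ (inv_pos.2 hcard), inv_mul_eq_div] at hjensen

variable (α : ι → ℕ)

theorem mul_log_sub_add_le_sum_log_factorial :
    ((∑ i ∈ s, α i : ℕ) + #s / 2 : ℝ) * log (((∑ i ∈ s, α i : ℕ) + #s / 2 : ℝ) / #s)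
      - (∑ i ∈ s, α i : ℕ) + #s / 2 * log 2 ≤ ∑ i ∈ s, log (α i).factorial := by
  have hshift : ∑ i ∈ s, ((α i : ℝ) + 1 / 2) = (∑ i ∈ s, α i : ℕ) + #s / 2 := by
    rw [sum_add_distrib, sum_const, nsmul_eq_mul, mul_one_div, Nat.cast_sum]
  have hjensen := sum_mul_log_sum_div_card_le s (x := fun i ↦ (α i : ℝ) + 1 / 2)
    fun i _ ↦ by positivity
  rw [hshift] at hjensen
  have hfactorial := sum_le_sum fun i (_ : i ∈ s) ↦ add_half_mul_log_sub_le_log_factorial (α i)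
  rw [sum_add_distrib, sum_sub_distrib, sum_const, nsmul_eq_mul, ← Nat.cast_sum] at hfactorial
  linarith

theorem cast_multinomial_eq_div :
    (Nat.multinomial s α : ℝ) =
      (∑ i ∈ s, α i).factorial / (∏ i ∈ s, (α i).factorial : ℕ) := by
  rw [eq_div_iff (by exact_mod_cast prod_ne_zero_iff.2 fun i _ ↦ (α i).factorial_ne_zero),
    mul_comm]
  exact_mod_cast Nat.multinomial_spec s α

theorem log_multinomial :
    log (Nat.multinomial s α) =
      log (∑ i ∈ s, α i).factorial - ∑ i ∈ s, log (α i).factorial := by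
  have hne : ∀ i ∈ s, ((α i).factorial : ℝ) ≠ 0 := fun i _ ↦ by positivity
  rw [cast_multinomial_eq_div, Nat.cast_prod, log_div (by positivity) (prod_ne_zero_iff.2 hne),
    log_prod hne]

theorem log_multinomial_le (hα : 1 ≤ ∑ i ∈ s, α i) :
    log (Nat.multinomial s α) ≤
      1 - #s / 2 * (log 2 + 1) + ((∑ i ∈ s, α i : ℕ) + #s / 2 : ℝ) * log #s
        - (#s - 1) * (log (∑ i ∈ s, α i : ℕ) / 2) := by
  have hcard : (0 : ℝ) < #s := by
    exact_mod_cast (nonempty_of_sum_ne_zero (Nat.one_le_iff_ne_zero.1 hα)).card_pos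
  have hlower := mul_log_sub_add_le_sum_log_factorial s α
  rw [log_multinomial]
  generalize ∑ i ∈ s, α i = n at *
  have hn : (0 : ℝ) < n := by exact_mod_cast hα
  have hupper := log_factorial_le (Nat.one_le_iff_ne_zero.1 hα)
  have htangent := add_mul_log_add_le hn (half_pos hcard).le
  rw [log_div (by positivity) hcard.ne'] at hlower
  linarith

theorem multinomial_coefficient_bound_general (hα : 1 ≤ ∑ i ∈ s, α i) :
    (Nat.multinomial s α : ℝ) ≤
      exp 1 / (2 * exp 1) ^ ((#s : ℝ) / 2) * (#s : ℝ) ^ (((∑ i ∈ s, α i : ℕ) : ℝ) + (#s : ℝ) / 2) /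
        √(∑ i ∈ s, α i : ℕ) ^ ((#s : ℝ) - 1) := by
  have hcard : (0 : ℝ) < #s := by
    exact_mod_cast (nonempty_of_sum_ne_zero (Nat.one_le_iff_ne_zero.1 hα)).card_pos
  have hn : (0 : ℝ) < (∑ i ∈ s, α i : ℕ) := by exact_mod_cast hα
  have hpos : (0 : ℝ) < Nat.multinomial s α := by exact_mod_cast Nat.multinomial_pos s α
  rw [← log_le_log_iff hpos (by positivity), log_div (by positivity) (by positivity),
    log_mul (by positivity) (by positivity), log_div (by positivity) (by positivity), log_exp,
    log_rpow (by positivity), log_rpow hcard, log_rpow (by positivity),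
    log_mul two_ne_zero (exp_ne_zero 1), log_exp, log_sqrt hn.le]
  exact log_multinomial_le s α hα

end Multinomial

theorem sqrt_two_pi_lt_exp_one : √(2 * π) < exp 1 := by
  rw [sqrt_lt' (exp_pos 1)]
  nlinarith [exp_one_gt_d9, pi_lt_d2]

theorem exp_one_div_rpow_lt {d : ℝ} (hd : 1 ≤ d) :
    exp 1 / (2 * exp 1) ^ (d / 2) < √2 * exp d / √(2 * π) ^ (d - 1) := by
  have hbase : 1 ≤ 2 * exp 1 := by linarith [exp_one_gt_two]
  calc
    exp 1 / (2 * exp 1) ^ (d / 2) ≤ exp 1 :=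
      div_le_self (exp_pos 1).le (one_le_rpow hbase (by linarith))
    _ = exp d / exp 1 ^ (d - 1) := by rw [exp_one_rpow, ← exp_sub, sub_sub_cancel]
    _ ≤ exp d / √(2 * π) ^ (d - 1) :=
      div_le_div_of_nonneg_left (exp_pos d).le (by positivity)
        (rpow_le_rpow (sqrt_nonneg _) sqrt_two_pi_lt_exp_one.le (sub_nonneg.2 hd))
    _ < √2 * exp d / √(2 * π) ^ (d - 1) := by
      gcongr
      exact lt_mul_of_one_lt_left (exp_pos d) one_lt_sqrt_two

theorem exp_one_div_rpow_mul_div_lt {d c x : ℝ} (hd : 1 ≤ d) (hc : 0 < c) (hx : 0 < x) :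
    exp 1 / (2 * exp 1) ^ (d / 2) * c / √x ^ (d - 1) <
      √2 * exp d * c / √(2 * π * x) ^ (d - 1) := by
  calc
    _ < √2 * exp d / √(2 * π) ^ (d - 1) * c / √x ^ (d - 1) :=
      div_lt_div_of_pos_right (mul_lt_mul_of_pos_right (exp_one_div_rpow_lt hd) hc) (by positivity)
    _ = √2 * exp d * c / √(2 * π * x) ^ (d - 1) := by
      rw [sqrt_mul (x := 2 * π) (by positivity), mul_rpow (by positivity) (by positivity),
        div_mul_eq_mul_div, div_div]

/-- multinomial coefficient bound
`|α|!/α! < √2 e^d d^{|α|+d/2} / (√(2π|α|))^{d−1}`. -/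
theorem multinomial_coefficient_bound
    (d : ℕ) (hd : 1 ≤ d) (α : Fin d → ℕ) (hα : 1 ≤ ∑ i, α i) :
    (Nat.factorial (∑ i, α i) : ℝ) / ((∏ i, Nat.factorial (α i) : ℕ) : ℝ) <
      Real.sqrt 2 * Real.exp d * (d : ℝ) ^ (((∑ i, α i : ℕ) : ℝ) + (d : ℝ) / 2) /
        (Real.sqrt (2 * Real.pi * (∑ i, α i))) ^ ((d : ℝ) - 1) := by
  rw [← cast_multinomial_eq_div]
  refine (multinomial_coefficient_bound_general univ α hα).trans_lt ?_
  rw [card_fin]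
  exact exp_one_div_rpow_mul_div_lt (by exact_mod_cast hd) (by positivity) (by exact_mod_cast hα)
end

section
/- For every integer m ≥ 1, the series Σ_{n=1}^{∞} n^m (1/2)^n converges and Σ_{n=1}^{∞} n^m (1/2)^n = 2 Σ_{k=1}^{m} k! · S(m,k), where S(m,k) denotes the number of partitions of an m-element set into exactly k nonempty blocks (the Stirling number of the second kind). Equivalently, the polylogarithm value Li_{−m}(1/2) equals 2 Σ_{k=1}^{m} k! S(m,k). -/
open scoped Classical

/-- The Stirling number of the second kind `S(m,k)`: the number of partitions of an
`m`-element set into exactly `k` nonempty blocks. -/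
noncomputable def stirlingSecond (m k : ℕ) : ℕ :=
  (Finset.univ.filter
      (fun P : Finset (Finset (Fin m)) =>
        P.card = k ∧
        (∀ B ∈ P, B.Nonempty) ∧
        (P : Set (Finset (Fin m))).PairwiseDisjoint id ∧
        P.sup id = Finset.univ)).card

/-!
A map `f : α → β` amounts to the partition of `α` into the nonempty fibers of `f` together with an
injection of its blocks into `β`. Counting maps from an `m`-set to an `n`-set in this way gives
`n ^ m = ∑ k, S(m, k) * n (n - 1) ⋯ (n - k + 1)`. The polylogarithm series thereby splits into the
series `∑ n, n (n - 1) ⋯ (n - k + 1) * z ^ n = k! * z ^ k / (1 - z) ^ (k + 1)`, which are shifted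
negative binomial series, and the factor `z ^ k / (1 - z) ^ (k + 1)` equals `2` at `z = 1 / 2`.
-/

open Finset

section FiberPartition

variable {α β : Type*} [DecidableEq α]

lemma image_part_eq_parts {s : Finset α} (P : Finpartition s) : s.image P.part = P.parts := by
  ext B
  simp only [mem_image]
  exact ⟨fun ⟨a, ha, hB⟩ => hB ▸ P.part_mem.2 ha, fun hB => P.part_surjOn hB⟩

variable [Fintype α]

/-- The partition of a finite type into the nonempty fibers of `f`, by which the maps `α → β` are
sorted in order to count them. Points of `β` outside the range of `f` contribute no block. -/
noncomputable def fiberPartition (f : α → β) : Finpartition (univ : Finset α) :=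
  Finpartition.ofSetoid (Setoid.ker f)

lemma fiberPartition_eq_iff {f : α → β} {P : Finpartition (univ : Finset α)} :
    fiberPartition f = P ↔ ∀ a b, P.part a = P.part b ↔ f a = f b := by
  have mem_part (Q : Finpartition (univ : Finset α)) (a b : α) :
      b ∈ Q.part a ↔ Q.part a = Q.part b :=
    (Q.mem_part_iff_part_eq_part (mem_univ b) (mem_univ a)).trans eq_comm
  constructor
  · rintro rfl a b
    exact (mem_part _ a b).symm.trans Finpartition.mem_part_ofSetoid_iff_rel
  · intro h
    ext1
    rw [← image_part_eq_parts, ← image_part_eq_parts]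
    congr 1
    ext a b
    rw [mem_part P, h]
    exact Finpartition.mem_part_ofSetoid_iff_rel

variable [Fintype β]

lemma card_filter_fiberPartition_eq (P : Finpartition (univ : Finset α)) :
    #{f : α → β | fiberPartition f = P} = (Fintype.card β).descFactorial #P.parts := by
  let block (a : α) : P.parts := ⟨P.part a, P.part_mem.2 (mem_univ a)⟩
  have block_eq_iff {a b : α} : block a = block b ↔ P.part a = P.part b := Subtype.ext_iff
  have block_surjective : Function.Surjective block := fun B =>
    let ⟨a, _, ha⟩ := P.part_surjOn B.2
    ⟨a, Subtype.ext ha⟩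
  have card_embedding :
      #(univ : Finset (P.parts ↪ β)) = (Fintype.card β).descFactorial #P.parts := by
    rw [card_univ, Fintype.card_embedding_eq, Fintype.card_coe]
  rw [← card_embedding]
  symm
  refine card_bij (fun g _ => g ∘ block) (fun g _ => ?_) (fun g _ g' _ h => ?_) (fun f hf => ?_)
  · simp [fiberPartition_eq_iff, block_eq_iff]
  · exact DFunLike.coe_injective (block_surjective.injective_comp_right h)
  · have hf : ∀ a b, block a = block b ↔ f a = f b := by
      simpa [fiberPartition_eq_iff, block_eq_iff] using hf
    let rep := Function.surjInv block_surjective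
    have block_rep (B : P.parts) : block (rep B) = B := Function.surjInv_eq block_surjective B
    refine ⟨⟨f ∘ rep, fun B C h => ?_⟩, mem_univ _, funext fun a => ?_⟩
    · rw [← block_rep B, ← block_rep C]
      exact (hf _ _).2 h
    · exact (hf _ _).1 (block_rep (block a))

variable (α β) in
lemma card_pow_card_eq_sum_descFactorial :
    Fintype.card β ^ Fintype.card α =
      ∑ P : Finpartition (univ : Finset α), (Fintype.card β).descFactorial #P.parts := by
  rw [← Fintype.card_fun, ← card_univ,
    card_eq_sum_card_fiberwise (f := fiberPartition) (t := univ) (fun f _ => mem_univ _)]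
  exact sum_congr rfl fun P _ => card_filter_fiberPartition_eq P

end FiberPartition

section StirlingSecond

lemma stirlingSecond_eq_card_finpartition (m k : ℕ) :
    stirlingSecond m k = #{P : Finpartition (univ : Finset (Fin m)) | #P.parts = k} := by
  symm
  refine card_bij (fun P _ => P.parts) (fun P hP => ?_) (fun P _ Q _ => Finpartition.ext)
    (fun parts h => ?_)
  · simp only [mem_filter, mem_univ, true_and] at hP ⊢
    exact ⟨hP, fun _ => P.nonempty_of_mem_parts, P.disjoint, P.sup_parts⟩
  · simp only [mem_filter, mem_univ, true_and] at h
    obtain ⟨card_eq, nonempty, disjoint, sup_eq⟩ := h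
    exact ⟨⟨parts, disjoint.supIndep, sup_eq, fun h => not_nonempty_empty (nonempty ∅ h)⟩,
      by simpa using card_eq, rfl⟩

lemma stirlingSecond_zero_right {m : ℕ} (hm : m ≠ 0) : stirlingSecond m 0 = 0 := by
  have := Fin.pos_iff_nonempty.1 (Nat.pos_of_ne_zero hm)
  simp [stirlingSecond_eq_card_finpartition, univ_nonempty.ne_empty]

lemma pow_eq_sum_stirlingSecond_mul_descFactorial (m n : ℕ) :
    n ^ m = ∑ k ∈ range (m + 1), stirlingSecond m k * n.descFactorial k := by
  have card_parts_mem (P : Finpartition (univ : Finset (Fin m))) : #P.parts ∈ range (m + 1) := by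
    simpa [Nat.lt_succ_iff] using P.card_parts_le_card
  calc
    n ^ m = ∑ P : Finpartition (univ : Finset (Fin m)), n.descFactorial #P.parts := by
      simpa using card_pow_card_eq_sum_descFactorial (Fin m) (Fin n)
    _ = ∑ k ∈ range (m + 1), ∑ P : Finpartition (univ : Finset (Fin m)) with #P.parts = k,
          n.descFactorial k :=
      (sum_fiberwise_of_maps_to' (fun P _ => card_parts_mem P) _).symm
    _ = ∑ k ∈ range (m + 1), stirlingSecond m k * n.descFactorial k := by
      simp only [sum_const, smul_eq_mul, stirlingSecond_eq_card_finpartition]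

end StirlingSecond

section PolylogSeries

variable {𝕜 : Type*} [NormedDivisionRing 𝕜] {z : 𝕜}

lemma hasSum_descFactorial_mul_geometric (k : ℕ) (hz : ‖z‖ < 1) :
    HasSum (fun n : ℕ => (n.descFactorial k : 𝕜) * z ^ n)
      (k.factorial * (z ^ k / (1 - z) ^ (k + 1))) := by
  have initial_terms : ∑ n ∈ range k, (n.descFactorial k : 𝕜) * z ^ n = 0 :=
    sum_eq_zero fun n hn => by simp [Nat.descFactorial_of_lt (mem_range.1 hn)]
  have shifted_term (n : ℕ) : ((n + k).descFactorial k : 𝕜) * z ^ (n + k) =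
      k.factorial * z ^ k * ((n + k).choose k * z ^ n) := by
    rw [Nat.descFactorial_eq_factorial_mul_choose, Nat.cast_mul, add_comm n k, pow_add, mul_assoc,
      mul_assoc, (Nat.cast_commute _ (z ^ k)).left_comm]
  rw [← hasSum_nat_add_iff' k, initial_terms, sub_zero]
  simpa only [shifted_term, mul_one_div, mul_div_assoc] using
    (hasSum_choose_mul_geometric_of_norm_lt_one k hz).mul_left ((k.factorial : 𝕜) * z ^ k)

lemma hasSum_pow_mul_geometric (m : ℕ) (hz : ‖z‖ < 1) :
    HasSum (fun n : ℕ => (n : 𝕜) ^ m * z ^ n)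
      (∑ k ∈ range (m + 1),
        k.factorial * stirlingSecond m k * (z ^ k / (1 - z) ^ (k + 1))) := by
  have expand_pow (n : ℕ) : (n : 𝕜) ^ m * z ^ n =
      ∑ k ∈ range (m + 1), stirlingSecond m k * (n.descFactorial k * z ^ n) := by
    rw [← Nat.cast_pow, pow_eq_sum_stirlingSecond_mul_descFactorial]
    simp only [Nat.cast_sum, Nat.cast_mul, sum_mul, mul_assoc]
  simp only [expand_pow]
  refine hasSum_sum fun k _ => ?_
  rw [(Nat.cast_commute k.factorial _).eq, mul_assoc]
  exact (hasSum_descFactorial_mul_geometric k hz).mul_left _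

theorem polylog_half_eq_stirling_sum_general {m : ℕ} (hm : m ≠ 0) (hz : ‖z‖ < 1) :
    HasSum (fun n : ℕ => ((n + 1 : ℕ) : 𝕜) ^ m * z ^ (n + 1))
      (∑ k ∈ Icc 1 m, k.factorial * stirlingSecond m k * (z ^ k / (1 - z) ^ (k + 1))) := by
  have zeroth_term : ∑ n ∈ range 1, (n : 𝕜) ^ m * z ^ n = 0 := by simp [hm]
  have h := hasSum_pow_mul_geometric m hz
  rw [← hasSum_nat_add_iff' 1, zeroth_term, sub_zero, range_eq_Ico,
    sum_eq_sum_Ico_succ_bot m.succ_pos, stirlingSecond_zero_right hm, Nat.cast_zero, mul_zero,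
    zero_mul, zero_add] at h
  exact h

end PolylogSeries

/-- `Li_{−m}(1/2) = Σ_{n≥1} n^m (1/2)^n = 2 Σ_{k=1}^m k! S(m,k)`. -/
theorem polylog_half_eq_stirling_sum (m : ℕ) (hm : 1 ≤ m) :
    Summable (fun n : ℕ => (((n + 1 : ℕ) : ℝ)) ^ m * (1 / 2 : ℝ) ^ (n + 1)) ∧
    ∑' n : ℕ, (((n + 1 : ℕ) : ℝ)) ^ m * (1 / 2 : ℝ) ^ (n + 1) =
      2 * ∑ k ∈ Finset.Icc 1 m, (Nat.factorial k : ℝ) * (stirlingSecond m k : ℝ) := by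
  have geometric_factor (k : ℕ) : (1 / 2 : ℝ) ^ k / (1 - 1 / 2) ^ (k + 1) = 2 := by
    rw [sub_half, pow_succ]
    field_simp
  have h := polylog_half_eq_stirling_sum_general (z := (1 / 2 : ℝ)) (Nat.one_le_iff_ne_zero.1 hm)
    (by norm_num)
  simp only [geometric_factor] at h
  rw [← sum_mul, mul_comm] at h
  exact ⟨h.summable, h.tsum_eq⟩
end

section
/- Let ζ : ℝ → ℝ be defined by ζ(x) = 1/(1+e^x). Then ζ is infinitely differentiable, and for every integer m ≥ 1, sup_{x∈ℝ} | ζ^{(m)}(x) | ≤ Σ_{k=1}^{m} k! · S(m,k), where S(m,k) denotes the number of partitions of an m-element set into exactly k nonempty blocks (the Stirling number of the second kind). -/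
open scoped Classical

/-!
The function `1 / (1 + eˣ)` is `σ(-x)` for the sigmoid `σ`, which satisfies `σ'(x) = σ(x) σ(-x)`.
Reflection does not change the size of derivatives, so if `|σ⁽ᵏ⁾| ≤ k!` for all `k ≤ n`, the Leibniz
rule bounds `|σ⁽ⁿ⁺¹⁾|` by the sum of `n + 1` terms `n.choose k * k! * (n - k)! = n!`, that is,
by `(n + 1)!`. Hence `|σ⁽ᵐ⁾| ≤ m!`, and `m! = m! * S(m, m)` is the last term of the claimed sum.
-/

open scoped Nat

theorem stirlingSecond_card_parts_pos {m : ℕ} (P : Finpartition (Finset.univ : Finset (Fin m))) :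
    0 < stirlingSecond m P.parts.card :=
  Finset.card_pos.mpr ⟨P.parts, Finset.mem_filter.mpr ⟨Finset.mem_univ _, rfl,
    fun _ ↦ P.nonempty_of_mem_parts, P.disjoint, P.sup_parts⟩⟩

theorem stirlingSecond_self_pos (m : ℕ) : 0 < stirlingSecond m m := by
  simpa only [Finpartition.card_bot, Finset.card_fin] using stirlingSecond_card_parts_pos (m := m) ⊥

theorem factorial_le_sum_factorial_mul_stirlingSecond {m : ℕ} (hm : 1 ≤ m) :
    m ! ≤ ∑ k ∈ Finset.Icc 1 m, k ! * stirlingSecond m k :=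
  calc m ! ≤ m ! * stirlingSecond m m := Nat.le_mul_of_pos_right _ (stirlingSecond_self_pos m)
    _ ≤ ∑ k ∈ Finset.Icc 1 m, k ! * stirlingSecond m k :=
      Finset.single_le_sum_of_canonicallyOrdered (f := fun k ↦ k ! * stirlingSecond m k)
        (Finset.right_mem_Icc.mpr hm)

theorem norm_iteratedFDeriv_mul_le_factorial_succ {𝕜 E A : Type*} [NontriviallyNormedField 𝕜]
    [NormedAddCommGroup E] [NormedSpace 𝕜 E] [NormedRing A] [NormedAlgebra 𝕜 A]
    {f g : E → A} {n : ℕ} {x : E} (hf : ContDiff 𝕜 n f) (hg : ContDiff 𝕜 n g)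
    (hf_le : ∀ k ≤ n, ‖iteratedFDeriv 𝕜 k f x‖ ≤ k !)
    (hg_le : ∀ k ≤ n, ‖iteratedFDeriv 𝕜 k g x‖ ≤ k !) :
    ‖iteratedFDeriv 𝕜 n (fun y ↦ f y * g y) x‖ ≤ (n + 1)! :=
  calc
    ‖iteratedFDeriv 𝕜 n (fun y ↦ f y * g y) x‖
    _ ≤ ∑ k ∈ Finset.range (n + 1),
          (n.choose k : ℝ) * ‖iteratedFDeriv 𝕜 k f x‖ * ‖iteratedFDeriv 𝕜 (n - k) g x‖ :=
      norm_iteratedFDeriv_mul_le hf hg x le_rfl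
    _ ≤ ∑ k ∈ Finset.range (n + 1), (n.choose k : ℝ) * k ! * (n - k)! := by
      gcongr with k hk
      · exact hf_le k (Finset.mem_range_succ_iff.mp hk)
      · exact hg_le (n - k) (n.sub_le k)
    _ = ∑ _k ∈ Finset.range (n + 1), (n ! : ℝ) := by
      refine Finset.sum_congr rfl fun k hk ↦ ?_
      exact_mod_cast Nat.choose_mul_factorial_mul_factorial (Finset.mem_range_succ_iff.mp hk)
    _ = (n + 1)! := by simp [Nat.factorial_succ]

theorem norm_iteratedDeriv_comp_neg {𝕜 F : Type*} [NontriviallyNormedField 𝕜]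
    [NormedAddCommGroup F] [NormedSpace 𝕜 F] (n : ℕ) (f : 𝕜 → F) (x : 𝕜) :
    ‖iteratedDeriv n (fun y ↦ f (-y)) x‖ = ‖iteratedDeriv n f (-x)‖ := by
  rw [iteratedDeriv_comp_neg, norm_smul, norm_pow, norm_neg, norm_one, one_pow, one_mul]

theorem deriv_sigmoid_eq_mul_sigmoid_neg :
    deriv Real.sigmoid = fun x ↦ Real.sigmoid x * Real.sigmoid (-x) := by
  simp only [Real.deriv_sigmoid, Real.sigmoid_neg]

theorem norm_iteratedDeriv_sigmoid_le_factorial (m : ℕ) (x : ℝ) :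
    ‖iteratedDeriv m Real.sigmoid x‖ ≤ m ! := by
  induction m using Nat.strong_induction_on generalizing x with
  | _ m ih =>
    cases m with
    | zero => simpa [abs_of_pos (Real.sigmoid_pos x)] using Real.sigmoid_le_one x
    | succ n =>
      have h_smooth : ContDiff ℝ n Real.sigmoid := contDiff_sigmoid.of_le le_top
      rw [iteratedDeriv_succ', deriv_sigmoid_eq_mul_sigmoid_neg,
        ← norm_iteratedFDeriv_eq_norm_iteratedDeriv]
      refine norm_iteratedFDeriv_mul_le_factorial_succ h_smooth (h_smooth.comp contDiff_neg)
        (fun k hk ↦ ?_) (fun k hk ↦ ?_)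
      · rw [norm_iteratedFDeriv_eq_norm_iteratedDeriv]
        exact ih k (Nat.lt_succ_of_le hk) x
      · rw [norm_iteratedFDeriv_eq_norm_iteratedDeriv, norm_iteratedDeriv_comp_neg]
        exact ih k (Nat.lt_succ_of_le hk) (-x)

theorem one_div_one_add_exp_eq_sigmoid_neg :
    (fun x : ℝ ↦ 1 / (1 + Real.exp x)) = fun x ↦ Real.sigmoid (-x) := by
  simp only [Real.sigmoid_def, neg_neg, one_div]

/-- `ζ(x) = 1/(1+eˣ)` is smooth and its `m`-th derivative is bounded by
`Σ_{k=1}^m k! S(m,k)`. -/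
theorem logistic_derivative_bound :
    ContDiff ℝ (⊤ : ℕ∞) (fun x : ℝ => 1 / (1 + Real.exp x)) ∧
    ∀ m : ℕ, 1 ≤ m → ∀ x : ℝ,
      |iteratedDeriv m (fun x : ℝ => 1 / (1 + Real.exp x)) x| ≤
        ∑ k ∈ Finset.Icc 1 m, (Nat.factorial k : ℝ) * (stirlingSecond m k : ℝ) := by
  rw [one_div_one_add_exp_eq_sigmoid_neg]
  refine ⟨(contDiff_sigmoid.of_le le_top).comp contDiff_neg, fun m hm x ↦ ?_⟩
  calc |iteratedDeriv m (fun x ↦ Real.sigmoid (-x)) x|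
    _ = ‖iteratedDeriv m Real.sigmoid (-x)‖ := norm_iteratedDeriv_comp_neg m Real.sigmoid x
    _ ≤ m ! := norm_iteratedDeriv_sigmoid_le_factorial m (-x)
    _ ≤ ∑ k ∈ Finset.Icc 1 m, (Nat.factorial k : ℝ) * (stirlingSecond m k : ℝ) := by
      exact_mod_cast factorial_le_sum_factorial_mul_stirlingSecond hm
end

section
/- Let φ : ℝ → ℝ be defined by φ(x) = 2 log( (2+e^x)/(1+e^x) ) and let f : ℝ → ℝ be defined by f(u) = 4e^{−u} − 10e^{−u/2} + e^{u/2} − e^u + 6. Then there exists θ > 1 such that: (i) for every integer m ≥ 1, sup_{x∈ℝ} |φ^{(m)}(x)| ≤ 2 (θ(1+θ))^m (m−1)!; and (ii) for every integer k ≥ 0 and every integer m ≥ 0, sup_{x∈ℝ} | (d/dx)^m ( f^{(k)} ∘ φ )(x) | ≤ 10 (θ(1+θ))^m (m+1)!. -/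
/-!
Put `w = exp (φ / 2)` and `σ = Real.sigmoid`. Then `w = 2 - σ x` and
`w⁻¹ = (1 + σ (x - log 2)) / 2`, while `φ' = 2 (σ (x - log 2) - σ x)`. Every derivative of `f` is a
combination of `w⁻²`, `w⁻¹`, `w`, `w²` and a constant, so both claims concern polynomials of degree
at most two in solutions of the logistic equation `s' = s - s²`. Along such a solution
`(sⁿ)' = n (sⁿ - sⁿ⁺¹)`, whence by induction the `m`-th derivative of `sⁿ` is at most
`2 ^ m * n (n + 1) ⋯ (n + m - 1)`. This gives both bounds with `2` in place of `θ (1 + θ)`; only the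
case `m = 0`, where the constant term does not vanish, is a direct estimate on `1 ≤ w ≤ 2`.
-/

open Real (exp log sigmoid)
open scoped ContDiff

section Riccati

variable {𝕜 : Type*} [NontriviallyNormedField 𝕜] {s : 𝕜 → 𝕜}

theorem contDiff_of_hasDerivAt_comp {F : Type*} [NormedAddCommGroup F] [NormedSpace 𝕜 F]
    {u : 𝕜 → F} {g : F → F} (hg : ContDiff 𝕜 ∞ g) (hu : ∀ x, HasDerivAt u (g (u x)) x) :
    ContDiff 𝕜 ∞ u := by
  have hderiv : deriv u = g ∘ u := funext fun x => (hu x).deriv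
  have hdiff : Differentiable 𝕜 u := fun x => (hu x).differentiableAt
  refine contDiff_infty.2 fun n => ?_
  induction n with
  | zero => exact contDiff_zero.2 hdiff.continuous
  | succ n ih =>
    rw [Nat.cast_succ]
    refine contDiff_succ_iff_deriv.2 ⟨hdiff, by simp, ?_⟩
    exact hderiv ▸ (hg.of_le (by exact_mod_cast le_top)).comp ih

variable {a b : 𝕜} {r : ℝ}

theorem contDiff_of_riccati (hs : ∀ x, HasDerivAt s (a * s x ^ 2 + b * s x) x) :
    ContDiff 𝕜 ∞ s :=
  contDiff_of_hasDerivAt_comp (g := fun y => a * y ^ 2 + b * y) (by fun_prop) hs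

theorem deriv_pow_of_riccati (hs : ∀ x, HasDerivAt s (a * s x ^ 2 + b * s x) x) (n : ℕ) :
    deriv (fun x => s x ^ n) = fun x => (n : 𝕜) * (a * s x ^ (n + 1) + b * s x ^ n) := by
  funext x
  rw [((hs x).fun_pow n).deriv]
  cases n with
  | zero => simp
  | succ n => rw [Nat.add_sub_cancel]; ring

theorem iteratedDeriv_succ_pow_of_riccati (hs : ∀ x, HasDerivAt s (a * s x ^ 2 + b * s x) x)
    (n m : ℕ) (x : 𝕜) :
    iteratedDeriv (m + 1) (fun x => s x ^ n) x =
      n * (a * iteratedDeriv m (fun x => s x ^ (n + 1)) x +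
        b * iteratedDeriv m (fun x => s x ^ n) x) := by
  have hsmooth : ContDiff 𝕜 m s := (contDiff_of_riccati hs).of_le (by exact_mod_cast le_top)
  rw [iteratedDeriv_succ', deriv_pow_of_riccati hs, iteratedDeriv_const_mul_field,
    iteratedDeriv_fun_add (by fun_prop) (by fun_prop), iteratedDeriv_const_mul_field,
    iteratedDeriv_const_mul_field]

theorem norm_iteratedDeriv_pow_le_of_riccati
    (hs : ∀ x, HasDerivAt s (a * s x ^ 2 + b * s x) x) (hr : ∀ x, ‖s x‖ ≤ r) (n m : ℕ) (x : 𝕜) :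
    ‖iteratedDeriv m (fun x => s x ^ n) x‖ ≤
      (‖a‖ * r + ‖b‖) ^ m * (n.ascFactorial m * r ^ n) := by
  have hr0 : 0 ≤ r := (norm_nonneg _).trans (hr x)
  induction m generalizing n with
  | zero => simpa using pow_le_pow_left₀ (norm_nonneg _) (hr x) n
  | succ m ih =>
    set L := ‖a‖ * r + ‖b‖ with hL
    have hn : ‖(n : 𝕜)‖ ≤ n := by simpa using Nat.norm_cast_le (α := 𝕜) n
    have hasc : (n.ascFactorial m : ℝ) ≤ (n + 1).ascFactorial m := by
      exact_mod_cast Nat.ascFactorial_le m n.le_succ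
    have hsucc : (n.ascFactorial (m + 1) : ℝ) = n * (n + 1).ascFactorial m := by
      rw [Nat.ascFactorial_succ, ← Nat.succ_ascFactorial]
      push_cast
      rfl
    rw [iteratedDeriv_succ_pow_of_riccati hs, norm_mul]
    calc ‖(n : 𝕜)‖ * ‖a * iteratedDeriv m (fun x => s x ^ (n + 1)) x +
            b * iteratedDeriv m (fun x => s x ^ n) x‖
        ≤ n * (‖a‖ * (L ^ m * ((n + 1).ascFactorial m * r ^ (n + 1))) +
            ‖b‖ * (L ^ m * (n.ascFactorial m * r ^ n))) := by
          gcongr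
          refine norm_add_le_of_le ?_ ?_ <;> rw [norm_mul] <;> gcongr <;> exact ih _
      _ ≤ n * (‖a‖ * (L ^ m * ((n + 1).ascFactorial m * r ^ (n + 1))) +
            ‖b‖ * (L ^ m * ((n + 1).ascFactorial m * r ^ n))) := by gcongr
      _ = L ^ (m + 1) * (n.ascFactorial (m + 1) * r ^ n) := by rw [hsucc, hL]; ring

theorem norm_iteratedDeriv_sum_mul_pow_le_of_riccati
    (hs : ∀ x, HasDerivAt s (a * s x ^ 2 + b * s x) x) (hr : ∀ x, ‖s x‖ ≤ r)
    {N : ℕ} (c : Fin N → 𝕜) (m : ℕ) (x : 𝕜) :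
    ‖iteratedDeriv m (fun x => ∑ i, c i * s x ^ (i : ℕ)) x‖ ≤
      (‖a‖ * r + ‖b‖) ^ m * ∑ i, ‖c i‖ * ((i : ℕ).ascFactorial m * r ^ (i : ℕ)) := by
  have hsmooth : ContDiff 𝕜 m s := (contDiff_of_riccati hs).of_le (by exact_mod_cast le_top)
  rw [iteratedDeriv_fun_sum fun i _ => by fun_prop, Finset.mul_sum]
  refine norm_sum_le_of_le _ fun i _ => ?_
  rw [iteratedDeriv_const_mul_field, norm_mul, mul_left_comm]
  gcongr
  exact norm_iteratedDeriv_pow_le_of_riccati hs hr i m x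

end Riccati

section Sigmoid

theorem sigmoid_sub_log {c : ℝ} (hc : 0 < c) (x : ℝ) :
    sigmoid (x - log c) = exp x / (c + exp x) := by
  rw [Real.sigmoid_def, neg_sub, Real.exp_sub, Real.exp_log hc]
  field_simp
  ring

theorem sigmoid_eq_exp_div (x : ℝ) : sigmoid x = exp x / (1 + exp x) := by
  simpa using sigmoid_sub_log one_pos x

theorem abs_iteratedDeriv_sum_mul_sigmoid_pow_le {N : ℕ} (c : Fin N → ℝ) (d : ℝ) (m : ℕ) (x : ℝ) :
    |iteratedDeriv m (fun x => ∑ i, c i * sigmoid (x - d) ^ (i : ℕ)) x| ≤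
      2 ^ m * ∑ i, |c i| * (i : ℕ).ascFactorial m := by
  have logistic (x : ℝ) : HasDerivAt (fun x => sigmoid (x - d))
      (-1 * sigmoid (x - d) ^ 2 + 1 * sigmoid (x - d)) x :=
    ((Real.hasDerivAt_sigmoid (x - d)).comp_sub_const x d).congr_deriv (by ring)
  have bounded (x : ℝ) : ‖sigmoid (x - d)‖ ≤ 1 := by
    rw [Real.norm_of_nonneg (Real.sigmoid_nonneg _)]
    exact Real.sigmoid_le_one _
  simpa [one_add_one_eq_two] using
    norm_iteratedDeriv_sum_mul_pow_le_of_riccati logistic bounded c m x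

theorem abs_iteratedDeriv_sigmoid_sub_le (d : ℝ) (m : ℕ) (x : ℝ) :
    |iteratedDeriv m (fun x => sigmoid (x - d)) x| ≤ 2 ^ m * m.factorial := by
  cases m with
  | zero => simpa [abs_of_nonneg (Real.sigmoid_nonneg _)] using Real.sigmoid_le_one (x - d)
  | succ m =>
    simpa [Fin.sum_univ_two] using abs_iteratedDeriv_sum_mul_sigmoid_pow_le ![0, 1] d (m + 1) x

theorem abs_iteratedDeriv_quadratic_sigmoid_sub_le (α β γ d : ℝ) {m : ℕ} (hm : m ≠ 0) (x : ℝ) :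
    |iteratedDeriv m (fun x => γ + β * sigmoid (x - d) + α * sigmoid (x - d) ^ 2) x| ≤
      2 ^ m * (|β| * m.factorial + |α| * (m + 1).factorial) := by
  obtain ⟨m, rfl⟩ := Nat.exists_eq_succ_of_ne_zero hm
  have htwo : Nat.ascFactorial 2 (m + 1) = (m + 1 + 1).factorial := by
    simpa [add_comm] using Nat.factorial_mul_ascFactorial 1 (m + 1)
  simpa [Fin.sum_univ_three, Nat.zero_ascFactorial, htwo] using
    abs_iteratedDeriv_sum_mul_sigmoid_pow_le ![γ, β, α] d (m + 1) x

end Sigmoid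

/-- The function `φ` of the theorem, a smooth profile decreasing from `2 log 2` to `0`. -/
noncomputable def profile (x : ℝ) : ℝ := 2 * log ((2 + exp x) / (1 + exp x))

/-- The function `f` of the theorem, the nonlinearity evaluated along `profile`. -/
noncomputable def nonlinearity (u : ℝ) : ℝ :=
  4 * exp (-u) - 10 * exp (-u / 2) + exp (u / 2) - exp u + 6

theorem profile_mem_Icc (x : ℝ) : profile x ∈ Set.Icc 0 (2 * log 2) := by
  have hx := Real.exp_pos x
  have one_le : 1 ≤ (2 + exp x) / (1 + exp x) := by rw [le_div_iff₀ (by positivity)]; linarith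
  have le_two : (2 + exp x) / (1 + exp x) ≤ 2 := by rw [div_le_iff₀ (by positivity)]; linarith
  have := Real.log_nonneg one_le
  have := Real.log_le_log (by positivity) le_two
  constructor <;> unfold profile <;> linarith

theorem exp_profile_div_two (x : ℝ) : exp (profile x / 2) = 2 - sigmoid x := by
  rw [profile, mul_div_cancel_left₀ _ two_ne_zero, Real.exp_log (by positivity),
    sigmoid_eq_exp_div]
  field_simp
  ring

theorem exp_neg_profile_div_two (x : ℝ) :
    exp (-profile x / 2) = (1 + sigmoid (x - log 2)) / 2 := by
  rw [profile, neg_div, mul_div_cancel_left₀ _ two_ne_zero, Real.exp_neg,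
    Real.exp_log (by positivity), sigmoid_sub_log two_pos]
  field_simp
  ring

theorem deriv_profile :
    deriv profile = fun x => 2 * (sigmoid (x - log 2) - sigmoid x) := by
  funext x
  have hquot : HasDerivAt (fun x => (2 + exp x) / (1 + exp x)) _ x :=
    ((Real.hasDerivAt_exp x).const_add 2).fun_div ((Real.hasDerivAt_exp x).const_add 1)
      (by positivity)
  have hprofile : HasDerivAt profile _ x := (hquot.log (by positivity)).const_mul 2
  rw [hprofile.deriv, sigmoid_sub_log two_pos, sigmoid_eq_exp_div]
  field_simp

theorem abs_iteratedDeriv_succ_profile_le (m : ℕ) (x : ℝ) :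
    |iteratedDeriv (m + 1) profile x| ≤ 2 * 2 ^ (m + 1) * m.factorial := by
  have hsmooth : ContDiff ℝ m sigmoid := contDiff_sigmoid.of_le le_top
  have hshift := abs_iteratedDeriv_sigmoid_sub_le (log 2) m x
  have hcentre : |iteratedDeriv m sigmoid x| ≤ 2 ^ m * m.factorial := by
    simpa using abs_iteratedDeriv_sigmoid_sub_le 0 m x
  rw [iteratedDeriv_succ', deriv_profile, iteratedDeriv_const_mul_field,
    iteratedDeriv_fun_sub (by fun_prop) (by fun_prop), abs_mul, abs_two]
  calc 2 * |iteratedDeriv m (fun x => sigmoid (x - log 2)) x - iteratedDeriv m sigmoid x|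
      ≤ 2 * (2 ^ m * m.factorial + 2 ^ m * m.factorial) := by
        gcongr
        exact (abs_sub _ _).trans (add_le_add hshift hcentre)
    _ = 2 * 2 ^ (m + 1) * m.factorial := by ring

theorem iteratedDeriv_nonlinearity (k : ℕ) (u : ℝ) :
    iteratedDeriv k nonlinearity u =
      4 * (-1) ^ k * exp (-u / 2) ^ 2 - 10 * (-1 / 2) ^ k * exp (-u / 2) +
        (1 / 2) ^ k * exp (u / 2) - exp (u / 2) ^ 2 + 6 * 0 ^ k := by
  have hexp_sum : nonlinearity = fun u =>
      4 * exp (-1 * u) - 10 * exp (-1 / 2 * u) + exp (1 / 2 * u) - exp (1 * u) +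
        6 * exp (0 * u) := by
    funext u
    simp [nonlinearity, div_eq_inv_mul]
  rw [hexp_sum, iteratedDeriv_fun_add (by fun_prop) (by fun_prop),
    iteratedDeriv_fun_sub (by fun_prop) (by fun_prop),
    iteratedDeriv_fun_add (by fun_prop) (by fun_prop),
    iteratedDeriv_fun_sub (by fun_prop) (by fun_prop)]
  simp only [iteratedDeriv_const_mul_field, iteratedDeriv_exp_const_mul, ← Real.exp_nat_mul]
  ring_nf
  simp

theorem four_mul_sq_add_sq_le_five {y w : ℝ} (hyw : y * w = 1) (hy : y ∈ Set.Icc 0 1)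
    (hw : w ∈ Set.Icc 0 2) : 4 * y ^ 2 + w ^ 2 ≤ 5 := by
  have sum_nonneg : 0 ≤ 2 * y + w := by linarith [hy.1, hw.1]
  have sum_le : 2 * y + w ≤ 3 := by
    linarith [mul_nonneg (sub_nonneg.2 hy.2) (sub_nonneg.2 hw.2)]
  calc 4 * y ^ 2 + w ^ 2 = (2 * y + w) ^ 2 - 4 * (y * w) := by ring
    _ ≤ 3 ^ 2 - 4 * 1 := by rw [hyw]; gcongr
    _ = 5 := by norm_num

theorem abs_exp_combination_le_of_two_le {y w : ℝ} (hy : 0 ≤ y) (hw : 0 ≤ w) {k : ℕ}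
    (hk : 2 ≤ k) :
    |4 * (-1) ^ k * y ^ 2 - 10 * (-1 / 2) ^ k * y + (1 / 2) ^ k * w - w ^ 2| ≤
      4 * y ^ 2 + w ^ 2 + (10 * y + w) / 4 := by
  have half_pow_le : (1 / 2 : ℝ) ^ k ≤ 1 / 4 :=
    (pow_le_pow_of_le_one (by norm_num) (by norm_num) hk).trans_eq (by norm_num)
  have neg_half_pow_le : |(-1 / 2 : ℝ) ^ k| ≤ 1 / 4 := by
    rwa [abs_pow, neg_div, abs_neg, abs_of_pos one_half_pos]
  have y_sq_term : |4 * (-1) ^ k * y ^ 2| ≤ 4 * y ^ 2 := by simp [abs_mul]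
  have y_term : |10 * (-1 / 2) ^ k * y| ≤ 10 * (1 / 4) * y := by
    rw [abs_mul, abs_mul, abs_of_nonneg hy, abs_of_pos (by norm_num : (0 : ℝ) < 10)]
    gcongr
  have w_term : |(1 / 2) ^ k * w| ≤ 1 / 4 * w := by
    rw [abs_of_nonneg (by positivity)]
    gcongr
  have w_sq_nonneg := sq_nonneg w
  rw [abs_le] at y_sq_term y_term w_term ⊢
  constructor <;> linarith

theorem abs_exp_combination_le_ten {y w : ℝ} (hyw : y * w = 1) (hw : w ∈ Set.Icc 1 2) (k : ℕ) :
    |4 * (-1) ^ k * y ^ 2 - 10 * (-1 / 2) ^ k * y + (1 / 2) ^ k * w - w ^ 2 + 6 * 0 ^ k| ≤ 10 := by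
  obtain ⟨one_le_w, w_le_two⟩ := hw
  have half_le_y : 1 / 2 ≤ y := by nlinarith
  have y_le_one : y ≤ 1 := by nlinarith
  have squares_le : 4 * y ^ 2 + w ^ 2 ≤ 5 :=
    four_mul_sq_add_sq_le_five hyw ⟨by linarith, y_le_one⟩ ⟨by linarith, w_le_two⟩
  match k with
  | 0 =>
    have y_part_nonneg : 0 ≤ (1 - y) * (6 - 4 * y) := by nlinarith
    have y_part_le : (1 - y) * (6 - 4 * y) ≤ 2 := by nlinarith
    have w_part_nonneg : 0 ≤ w * (w - 1) := by nlinarith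
    have w_part_le : w * (w - 1) ≤ 2 := by nlinarith
    rw [abs_le]
    constructor <;> linarith
  | 1 =>
    have y_sq_nonneg := sq_nonneg y
    have w_sq_nonneg := sq_nonneg w
    rw [abs_le]
    constructor <;> linarith
  | k + 2 =>
    rw [zero_pow (by lia), mul_zero, add_zero]
    refine (abs_exp_combination_le_of_two_le (by linarith) (by linarith) (by lia)).trans ?_
    linarith

theorem abs_iteratedDeriv_nonlinearity_le {u : ℝ} (hu : u ∈ Set.Icc 0 (2 * log 2)) (k : ℕ) :
    |iteratedDeriv k nonlinearity u| ≤ 10 := by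
  have one_le_exp : 1 ≤ exp (u / 2) := Real.one_le_exp (by linarith [hu.1])
  have exp_le_two : exp (u / 2) ≤ 2 := (Real.le_log_iff_exp_le two_pos).1 (by linarith [hu.2])
  have exp_mul_exp : exp (-u / 2) * exp (u / 2) = 1 := by
    rw [← Real.exp_add, neg_div, neg_add_cancel, Real.exp_zero]
  rw [iteratedDeriv_nonlinearity]
  exact abs_exp_combination_le_ten exp_mul_exp ⟨one_le_exp, exp_le_two⟩ k

theorem iteratedDeriv_nonlinearity_profile (k : ℕ) (x : ℝ) :
    iteratedDeriv k nonlinearity (profile x) =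
      ((-1) ^ k - 5 * (-1 / 2) ^ k + 2 * (1 / 2) ^ k - 4 + 6 * 0 ^ k +
        (2 * (-1) ^ k - 5 * (-1 / 2) ^ k) * sigmoid (x - log 2) +
        (-1) ^ k * sigmoid (x - log 2) ^ 2) +
      ((4 - (1 / 2) ^ k) * sigmoid x - sigmoid x ^ 2) := by
  rw [iteratedDeriv_nonlinearity, exp_profile_div_two, exp_neg_profile_div_two]
  ring

theorem two_mul_factorial_le {m : ℕ} (hm : m ≠ 0) :
    2 * (m.factorial : ℝ) ≤ (m + 1).factorial := by
  rw [Nat.factorial_succ]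
  exact_mod_cast Nat.mul_le_mul_right _ (by lia)

theorem abs_iteratedDeriv_iteratedDeriv_nonlinearity_profile_le (k m : ℕ) (x : ℝ) :
    |iteratedDeriv m (fun x => iteratedDeriv k nonlinearity (profile x)) x| ≤
      10 * 2 ^ m * (m + 1).factorial := by
  rcases eq_or_ne m 0 with rfl | hm
  · simpa using abs_iteratedDeriv_nonlinearity_le (profile_mem_Icc x) k
  have hsmooth : ContDiff ℝ m sigmoid := contDiff_sigmoid.of_le le_top
  have shifted_coeff_le : |2 * (-1 : ℝ) ^ k - 5 * (-1 / 2) ^ k| ≤ 7 := by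
    have neg_half_pow_le : |(-1 / 2 : ℝ) ^ k| ≤ 1 := by
      rw [abs_pow]
      exact pow_le_one₀ (abs_nonneg _) (by norm_num [abs_div])
    calc _ ≤ |2 * (-1 : ℝ) ^ k| + |5 * (-1 / 2 : ℝ) ^ k| := abs_sub _ _
      _ ≤ 2 * 1 + 5 * 1 := by simp only [abs_mul, abs_neg_one_pow]; gcongr <;> simp
      _ = 7 := by norm_num
  have centred_coeff_le : |4 - (1 / 2 : ℝ) ^ k| ≤ 4 := by
    have half_pow_nonneg : (0 : ℝ) ≤ (1 / 2) ^ k := by positivity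
    have half_pow_le : (1 / 2 : ℝ) ^ k ≤ 1 := pow_le_one₀ (by norm_num) (by norm_num)
    rw [abs_of_nonneg] <;> linarith
  have shifted := abs_iteratedDeriv_quadratic_sigmoid_sub_le ((-1) ^ k)
    (2 * (-1) ^ k - 5 * (-1 / 2) ^ k)
    ((-1) ^ k - 5 * (-1 / 2) ^ k + 2 * (1 / 2) ^ k - 4 + 6 * 0 ^ k) (log 2) hm x
  have centred := abs_iteratedDeriv_quadratic_sigmoid_sub_le (-1) (4 - (1 / 2) ^ k) 0 0 hm x
  simp only [sub_zero, zero_add, neg_one_mul, ← sub_eq_add_neg, abs_neg, abs_one] at centred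
  rw [abs_neg_one_pow] at shifted
  simp_rw [iteratedDeriv_nonlinearity_profile]
  rw [iteratedDeriv_fun_add (by fun_prop) (by fun_prop)]
  calc _ ≤ _ := (abs_add_le _ _).trans (add_le_add shifted centred)
    _ ≤ 2 ^ m * (7 * (m.factorial : ℝ) + 1 * (m + 1).factorial) +
          2 ^ m * (4 * m.factorial + 1 * (m + 1).factorial) := by gcongr
    _ = 2 ^ m * (11 * m.factorial + 2 * (m + 1).factorial) := by ring
    _ ≤ 2 ^ m * (10 * (m + 1).factorial) := by gcongr; linarith [two_mul_factorial_le hm]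
    _ = 10 * 2 ^ m * (m + 1).factorial := by ring

/-- for `φ(x) = 2 log((2+eˣ)/(1+eˣ))` and
`f(u) = 4e^{−u} − 10e^{−u/2} + e^{u/2} − e^u + 6`, there exists `θ > 1` with
`sup|φ^{(m)}| ≤ 2(θ(1+θ))^m (m−1)!` and `sup|(f^{(k)}∘φ)^{(m)}| ≤ 10(θ(1+θ))^m (m+1)!`. -/
theorem functional_nonlinearity_example_bounds
    (φ f : ℝ → ℝ)
    (hφ : ∀ x : ℝ, φ x = 2 * Real.log ((2 + Real.exp x) / (1 + Real.exp x)))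
    (hf : ∀ u : ℝ, f u = 4 * Real.exp (-u) - 10 * Real.exp (-u / 2) +
      Real.exp (u / 2) - Real.exp u + 6) :
    ∃ θ : ℝ, 1 < θ ∧
      (∀ m : ℕ, 1 ≤ m → ∀ x : ℝ,
        |iteratedDeriv m φ x| ≤ 2 * (θ * (1 + θ)) ^ m * (Nat.factorial (m - 1) : ℝ)) ∧
      (∀ (k m : ℕ) (x : ℝ),
        |iteratedDeriv m (fun x => iteratedDeriv k f (φ x)) x| ≤
          10 * (θ * (1 + θ)) ^ m * (Nat.factorial (m + 1) : ℝ)) := by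
  obtain rfl : φ = profile := funext hφ
  obtain rfl : f = nonlinearity := funext hf
  refine ⟨2, one_lt_two, fun m hm x => ?_, fun k m x => ?_⟩
  · obtain ⟨m, rfl⟩ := Nat.exists_eq_add_of_le' hm
    refine (abs_iteratedDeriv_succ_profile_le m x).trans ?_
    rw [Nat.add_sub_cancel]
    gcongr
    norm_num
  · refine (abs_iteratedDeriv_iteratedDeriv_nonlinearity_profile_le k m x).trans ?_
    gcongr
    norm_num
end

section
/- Let T > 0 and define u : [0,T] × ℝ → ℝ by u(t,x) = 2 log( (2 + e^{x−(T−t)}) / (1 + e^{x−(T−t)}) ). Then u is infinitely differentiable, satisfies 0 < u(t,x) < 2 log 2 for all (t,x) ∈ [0,T] × ℝ, satisfies the terminal condition u(T,x) = 2 log( (2+e^x)/(1+e^x) ), and solves the semilinear heat equation ∂u/∂t (t,x) + (1/2) ∂²u/∂x² (t,x) + 4 e^{−u(t,x)} − 10 e^{−u(t,x)/2} + e^{u(t,x)/2} − e^{u(t,x)} + 6 = 0 for all (t,x) ∈ [0,T] × ℝ. -/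
/-!
The function `u` is a travelling front `u(t, x) = f(x - (T - t))`, so the equation reduces to an
ordinary differential equation expressing `f' + ½ f''` through `f`. For the profile
`f = 2 log ((a + e^s) / (b + e^s))` one has `f' = 2 (p_a - p_b)` with `p_c = e^s / (c + e^s)`, and
each `p_c` solves the logistic equation `p' = p (1 - p)`. Since `(a - b) p_a = a e^{-f/2} - b` and
`(a - b) p_b = a - b e^{f/2}`, the sum `f' + ½ f''`, a quadratic polynomial in `p_a` and `p_b`, is a
combination of `e^{±f}`, `e^{±f/2}` and `1`. The case `a = 2`, `b = 1` gives the stated equation.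
-/

open Real
open scoped ContDiff

/-- The logistic function `e^s / (a + e^s)`, whose parameter `a` shifts its midpoint to
`s = log a` when `0 < a`. -/
noncomputable def logistic (a s : ℝ) : ℝ := exp s / (a + exp s)

/-- The profile `2 log ((a + e^s) / (b + e^s))` of a front descending, when `0 < b < a`, from
`2 log (a / b)` at `-∞` to `0` at `+∞`; each `u(t, ·)` is a translate of it. -/
noncomputable def logFront (a b s : ℝ) : ℝ := 2 * log ((a + exp s) / (b + exp s))

lemma hasDerivAt_logistic {a s : ℝ} (hs : a + exp s ≠ 0) :
    HasDerivAt (logistic a) (logistic a s * (1 - logistic a s)) s := by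
  refine ((hasDerivAt_exp s).div ((hasDerivAt_exp s).const_add a) hs).congr_deriv ?_
  simp only [logistic]
  field_simp

lemma hasDerivAt_log_add_exp {a s : ℝ} (hs : a + exp s ≠ 0) :
    HasDerivAt (fun r ↦ log (a + exp r)) (logistic a s) s :=
  ((hasDerivAt_exp s).const_add a).log hs

section LogFront

variable {a b : ℝ}

lemma logFront_pos (hb : 0 ≤ b) (hab : b < a) (s : ℝ) : 0 < logFront a b s := by
  have hratio : 1 < (a + exp s) / (b + exp s) := by
    rw [one_lt_div (by positivity)]
    gcongr
  exact mul_pos two_pos (log_pos hratio)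

lemma logFront_lt (hb : 0 < b) (hab : b < a) (s : ℝ) : logFront a b s < 2 * log (a / b) := by
  have ha : 0 < a := hb.trans hab
  have hratio : (a + exp s) / (b + exp s) < a / b := by
    rw [div_lt_div_iff₀ (by positivity) hb]
    linarith [mul_lt_mul_of_pos_right hab (exp_pos s)]
  unfold logFront
  gcongr

lemma contDiff_logFront (ha : 0 ≤ a) (hb : 0 ≤ b) {n : WithTop ℕ∞} :
    ContDiff ℝ n (logFront a b) := by
  refine contDiff_const.mul (ContDiff.log (ContDiff.div ?_ ?_ fun s ↦ ?_) fun s ↦ ?_)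
  · fun_prop
  · fun_prop
  · positivity
  · positivity

lemma exp_logFront_div_two (ha : 0 ≤ a) (hb : 0 ≤ b) (s : ℝ) :
    exp (logFront a b s / 2) = (a + exp s) / (b + exp s) := by
  rw [logFront, mul_div_cancel_left₀ _ two_ne_zero, exp_log (by positivity)]

lemma sub_mul_logistic_left (ha : 0 ≤ a) (hb : 0 ≤ b) (s : ℝ) :
    (a - b) * logistic a s = a * exp (-logFront a b s / 2) - b := by
  have hne : a + exp s ≠ 0 := by positivity
  rw [neg_div, exp_neg, exp_logFront_div_two ha hb, inv_div, logistic]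
  field_simp
  ring

lemma sub_mul_logistic_right (ha : 0 ≤ a) (hb : 0 ≤ b) (s : ℝ) :
    (a - b) * logistic b s = a - b * exp (logFront a b s / 2) := by
  have hne : b + exp s ≠ 0 := by positivity
  rw [exp_logFront_div_two ha hb, logistic]
  field_simp
  ring

lemma deriv_logFront (ha : 0 ≤ a) (hb : 0 ≤ b) :
    deriv (logFront a b) = fun s ↦ 2 * (logistic a s - logistic b s) := by
  have hlog : logFront a b = fun s ↦ 2 * (log (a + exp s) - log (b + exp s)) := by
    ext s
    rw [logFront, log_div (by positivity) (by positivity)]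
  ext s
  rw [hlog]
  have hda := hasDerivAt_log_add_exp (a := a) (s := s) (by positivity)
  have hdb := hasDerivAt_log_add_exp (a := b) (s := s) (by positivity)
  exact ((hda.sub hdb).const_mul 2).deriv

lemma iteratedDeriv_two_logFront (ha : 0 ≤ a) (hb : 0 ≤ b) (s : ℝ) :
    iteratedDeriv 2 (logFront a b) s =
      2 * (logistic a s * (1 - logistic a s) - logistic b s * (1 - logistic b s)) := by
  rw [iteratedDeriv_succ, iteratedDeriv_one, deriv_logFront ha hb]
  have hda := hasDerivAt_logistic (a := a) (s := s) (by positivity)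
  have hdb := hasDerivAt_logistic (a := b) (s := s) (by positivity)
  exact ((hda.sub hdb).const_mul 2).deriv

lemma logFront_ode (ha : 0 ≤ a) (hb : 0 ≤ b) (s : ℝ) :
    (a - b) ^ 2 * (deriv (logFront a b) s + 1 / 2 * iteratedDeriv 2 (logFront a b) s) +
      a ^ 2 * exp (-logFront a b s) - a * (3 * a - b) * exp (-logFront a b s / 2) +
      b * (3 * b - a) * exp (logFront a b s / 2) - b ^ 2 * exp (logFront a b s) +
      2 * (a ^ 2 - b ^ 2) = 0 := by
  have hexp (r : ℝ) : exp r = exp (r / 2) ^ 2 := by rw [sq, ← exp_add, add_halves]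
  have hp := sub_mul_logistic_left ha hb s
  have hq := sub_mul_logistic_right ha hb s
  rw [deriv_logFront ha hb, iteratedDeriv_two_logFront ha hb, hexp (-logFront a b s),
    hexp (logFront a b s)]
  set p := logistic a s
  set q := logistic b s
  set v := exp (logFront a b s / 2)
  set w := exp (-logFront a b s / 2)
  linear_combination (3 * (a - b) - (a - b) * p - (a * w - b)) * hp -
    (3 * (a - b) - (a - b) * q - (a - b * v)) * hq

end LogFront

lemma deriv_comp_sub_sub {𝕜 F : Type*} [NontriviallyNormedField 𝕜] [NormedAddCommGroup F]
    [NormedSpace 𝕜 F] (f : 𝕜 → F) (T t x : 𝕜) :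
    deriv (fun t' ↦ f (x - (T - t'))) t = deriv f (x - (T - t)) := by
  rw [deriv_comp_const_sub (f := fun r ↦ f (x - r)), deriv_comp_const_sub, neg_neg]

theorem explicit_solution_semilinear_heat_general
    {a b : ℝ} (hb : 0 < b) (hab : b < a) (T : ℝ) (u : ℝ → ℝ → ℝ)
    (hu : ∀ t x : ℝ, u t x = 2 * log ((a + exp (x - (T - t))) / (b + exp (x - (T - t))))) :
    ContDiff ℝ ω (fun p : ℝ × ℝ ↦ u p.1 p.2) ∧
    (∀ t x : ℝ, 0 < u t x ∧ u t x < 2 * log (a / b)) ∧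
    (∀ x : ℝ, u T x = 2 * log ((a + exp x) / (b + exp x))) ∧
    (∀ t x : ℝ,
      (a - b) ^ 2 * (deriv (fun t' ↦ u t' x) t + 1 / 2 * iteratedDeriv 2 (fun x' ↦ u t x') x) +
        a ^ 2 * exp (-u t x) - a * (3 * a - b) * exp (-u t x / 2) +
        b * (3 * b - a) * exp (u t x / 2) - b ^ 2 * exp (u t x) + 2 * (a ^ 2 - b ^ 2) = 0) := by
  have ha : 0 < a := hb.trans hab
  obtain rfl : u = fun t x ↦ logFront a b (x - (T - t)) := funext₂ hu
  refine ⟨(contDiff_logFront ha.le hb.le).comp (by fun_prop),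
    fun t x ↦ ⟨logFront_pos hb.le hab _, logFront_lt hb hab _⟩, fun x ↦ ?_, fun t x ↦ ?_⟩
  · simp only [sub_self, sub_zero, logFront]
  · rw [deriv_comp_sub_sub, iteratedDeriv_comp_sub_const]
    exact logFront_ode ha.le hb.le _

/-- `u(t,x) = 2 log((2+e^{x−(T−t)})/(1+e^{x−(T−t)}))` is smooth, takes
values in `(0, 2 log 2)`, has the prescribed terminal condition, and solves the
semilinear heat equation `∂ₜu + ½∂ₓₓu + 4e^{−u} − 10e^{−u/2} + e^{u/2} − e^{u} + 6 = 0`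
on `[0,T] × ℝ`. -/
theorem explicit_solution_semilinear_heat
    (T : ℝ) (hT : 0 < T) (u : ℝ → ℝ → ℝ)
    (hu : ∀ t x : ℝ, u t x =
      2 * Real.log ((2 + Real.exp (x - (T - t))) / (1 + Real.exp (x - (T - t))))) :
    ContDiff ℝ (⊤ : ℕ∞) (fun p : ℝ × ℝ => u p.1 p.2) ∧
    (∀ t ∈ Set.Icc (0 : ℝ) T, ∀ x : ℝ, 0 < u t x ∧ u t x < 2 * Real.log 2) ∧
    (∀ x : ℝ, u T x = 2 * Real.log ((2 + Real.exp x) / (1 + Real.exp x))) ∧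
    (∀ t ∈ Set.Icc (0 : ℝ) T, ∀ x : ℝ,
      deriv (fun t' => u t' x) t + (1 / 2) * iteratedDeriv 2 (fun x' => u t x') x +
        4 * Real.exp (-(u t x)) - 10 * Real.exp (-(u t x) / 2) +
        Real.exp ((u t x) / 2) - Real.exp (u t x) + 6 = 0) := by
  obtain ⟨hsmooth, hbound, hterminal, heq⟩ :=
    explicit_solution_semilinear_heat_general one_pos one_lt_two T u hu
  refine ⟨hsmooth.of_le le_top, fun t _ x ↦ by simpa using hbound t x, hterminal, fun t _ x ↦ ?_⟩
  linear_combination heq t x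
end
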